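/- arXiv:0909.4232 — 7 statements merged into one kernel-verified Lean document; each statement's English description precedes it below -/
import Mathlib

section
/- For every real ν, the Macdonald function of imaginary order has the asymptotic behaviour K_{iν}(x) ~ √(π/(2x)) · e^{−x} as x → +∞; precisely, K_{iν}(x) · e^{x} · √(2x/π) → 1 as x → +∞, and moreover K_{iν}(x) · e^{x} · √(2x/π) − 1 = O(1/x) as x → +∞. -/
open Real Filter Asymptotics

/-- The Macdonald function of imaginary order: `K_{iν}(x) = ∫_0^∞ e^{-x cosh t} cos(ν t) dt`. -/
noncomputable def Kim (ν x : ℝ) : ℝ :=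
  ∫ t in Set.Ioi (0 : ℝ), Real.exp (-x * Real.cosh t) * Real.cos (ν * t)

theorem kim_cosh_lower (t : ℝ) (ht : 0 ≤ t) : 1 + t ^ 2 / 2 ≤ Real.cosh t := by
  have h1 : Real.cosh t = 2 * Real.sinh (t / 2) ^ 2 + 1 := by
    have h := Real.cosh_two_mul (t / 2)
    have h2 := Real.cosh_sq (t / 2)
    rw [show 2 * (t / 2) = t by ring] at h
    linarith
  have h3 : t / 2 ≤ Real.sinh (t / 2) := Real.self_le_sinh_iff.2 (by linarith)
  nlinarith

theorem kim_cosh_upper (t : ℝ) (ht : 0 ≤ t) (h1 : t ≤ 1) :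
    Real.cosh t ≤ 1 + t ^ 2 / 2 + t ^ 4 := by
  have h := Real.cosh_le_exp_half_sq t
  have h2 : t ^ 2 ≤ 1 := by nlinarith
  have h3 := Real.abs_exp_sub_one_sub_id_le (x := t ^ 2 / 2)
    (by rw [abs_of_nonneg (by positivity)]; linarith)
  have h4 := (abs_le.1 h3).2
  nlinarith [sq_nonneg (t ^ 2)]

theorem kim_ptwise (ν x t : ℝ) (hx : 1 ≤ x) (ht : 0 ≤ t) :
    |Real.exp (-x * Real.cosh t) * Real.cos (ν * t) * Real.exp x - Real.exp (-(x / 2) * t ^ 2)|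
      ≤ (2 * ν ^ 2 + 32) / x * Real.exp (-(x / 4) * t ^ 2) := by
  have hx0 : 0 < x := by linarith
  set d := Real.cosh t - 1 - t ^ 2 / 2 with hd
  have hd0 : 0 ≤ d := by have := kim_cosh_lower t ht; linarith
  set v := x * t ^ 2 / 4 with hv
  have hv0 : 0 ≤ v := by positivity
  set E := Real.exp (-v) with hE
  have hE0 : 0 < E := Real.exp_pos _
  have e1 : Real.exp (-(x / 4) * t ^ 2) = E := by rw [hE, hv]; congr 1; ring
  have e2 : Real.exp (-(x / 2) * t ^ 2) = E * E := by
    rw [hE, ← Real.exp_add, hv]; congr 1; ring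
  have e3 : Real.exp (-x * Real.cosh t) * Real.cos (ν * t) * Real.exp x
      = E * E * Real.exp (-(x * d)) * Real.cos (ν * t) := by
    rw [mul_right_comm, ← Real.exp_add, hE, ← Real.exp_add, ← Real.exp_add, hv, hd]
    congr 2; ring
  rw [e1, e2, e3]
  set D := Real.exp (-(x * d)) with hD
  have hD0 : 0 < D := Real.exp_pos _
  have hD1 : D ≤ 1 := Real.exp_le_one_iff.2 (by have := mul_nonneg hx0.le hd0; linarith)
  have hD2 : 1 - D ≤ x * t ^ 4 := by
    rcases le_total t 1 with h | h
    · have h1 := Real.add_one_le_exp (-(x * d))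
      have h2 : d ≤ t ^ 4 := by have := kim_cosh_upper t ht h; linarith
      have h3 := mul_le_mul_of_nonneg_left h2 hx0.le
      linarith
    · have : 1 ≤ t ^ 4 := one_le_pow₀ h
      nlinarith
  have hc1 := Real.cos_le_one (ν * t)
  have hc2 := Real.one_sub_sq_div_two_le_cos (x := ν * t)
  set c := Real.cos (ν * t)
  have hk : |D * c - 1| ≤ ν ^ 2 * t ^ 2 / 2 + x * t ^ 4 := by
    rw [abs_le]
    have hp : 0 ≤ ν ^ 2 * t ^ 2 / 2 := by positivity
    have hq : 0 ≤ x * t ^ 4 := by positivity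
    constructor
    · nlinarith [mul_nonneg hD0.le (sub_nonneg.2 hc1), mul_nonneg (sub_nonneg.2 hD1) hp]
    · nlinarith [mul_nonneg hD0.le (sub_nonneg.2 hc1)]
  have hE1 : Real.exp v * E = 1 := by rw [hE, ← Real.exp_add]; simp
  have hv1 : v * E ≤ 1 := by
    have := Real.add_one_le_exp v
    nlinarith
  have hv2 : v ^ 2 * E ≤ 2 := by
    have := Real.quadratic_le_exp_of_nonneg hv0
    nlinarith
  have hkk : ν ^ 2 * t ^ 2 / 2 + x * t ^ 4 = (2 * ν ^ 2 * v + 16 * v ^ 2) / x := by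
    rw [hv]; field_simp; ring
  have hfin : (ν ^ 2 * t ^ 2 / 2 + x * t ^ 4) * E ≤ (2 * ν ^ 2 + 32) / x := by
    rw [hkk, div_mul_eq_mul_div]
    gcongr
    nlinarith [mul_le_mul_of_nonneg_left hv1 (sq_nonneg ν)]
  calc |E * E * D * c - E * E| = E * E * |D * c - 1| := by
        rw [show E * E * D * c - E * E = E * E * (D * c - 1) by ring, abs_mul,
          abs_of_pos (mul_pos hE0 hE0)]
    _ ≤ E * E * (ν ^ 2 * t ^ 2 / 2 + x * t ^ 4) := by gcongr
    _ = (ν ^ 2 * t ^ 2 / 2 + x * t ^ 4) * E * E := by ring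
    _ ≤ _ := by gcongr

theorem kim_bound (ν x : ℝ) (hx : 1 ≤ x) :
    |Kim ν x * Real.exp x * Real.sqrt (2 * x / π) - 1| ≤ (2 * ν ^ 2 + 32) * √2 * (1 / x) := by
  have hx0 : 0 < x := by linarith
  have hpi := Real.pi_pos
  set S := Real.sqrt (2 * x / π) with hS
  have hS0 : 0 ≤ S := Real.sqrt_nonneg _
  have i4 : MeasureTheory.IntegrableOn (fun t : ℝ => (2 * ν ^ 2 + 32) / x *
      Real.exp (-(x / 4) * t ^ 2)) (Set.Ioi 0) :=
    ((integrable_exp_neg_mul_sq (by positivity : 0 < x / 4)).const_mul _).integrableOn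
  have i2 : MeasureTheory.IntegrableOn (fun t : ℝ => Real.exp (-(x / 2) * t ^ 2)) (Set.Ioi 0) :=
    (integrable_exp_neg_mul_sq (by positivity : 0 < x / 2)).integrableOn
  have hae : ∀ᵐ t ∂(MeasureTheory.volume.restrict (Set.Ioi (0 : ℝ))),
      ‖Real.exp (-x * Real.cosh t) * Real.cos (ν * t) * Real.exp x
        - Real.exp (-(x / 2) * t ^ 2)‖
      ≤ (2 * ν ^ 2 + 32) / x * Real.exp (-(x / 4) * t ^ 2) := by
    filter_upwards [MeasureTheory.ae_restrict_mem measurableSet_Ioi] with t ht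
    exact kim_ptwise ν x t hx (le_of_lt ht)
  have id : MeasureTheory.IntegrableOn (fun t : ℝ =>
      Real.exp (-x * Real.cosh t) * Real.cos (ν * t) * Real.exp x
        - Real.exp (-(x / 2) * t ^ 2)) (Set.Ioi 0) := by
    refine MeasureTheory.Integrable.mono' i4 ?_ hae
    apply Continuous.aestronglyMeasurable
    have := Real.continuous_cosh
    fun_prop
  have hb := MeasureTheory.norm_integral_le_of_norm_le i4 hae
  have i1 : MeasureTheory.IntegrableOn (fun t : ℝ =>
      Real.exp (-x * Real.cosh t) * Real.cos (ν * t) * Real.exp x) (Set.Ioi 0) := by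
    refine (id.add i2).congr (Filter.Eventually.of_forall fun t => ?_)
    simp
  rw [MeasureTheory.integral_sub i1 i2, MeasureTheory.integral_mul_const,
    MeasureTheory.integral_const_mul, integral_gaussian_Ioi, integral_gaussian_Ioi] at hb
  change |Kim ν x * Real.exp x - _| ≤ _ at hb
  have s1 : √(π / (x / 2)) / 2 * S = 1 := by
    rw [hS, div_mul_eq_mul_div, ← Real.sqrt_mul (by positivity)]
    rw [show π / (x / 2) * (2 * x / π) = 2 ^ 2 by field_simp,
      Real.sqrt_sq (by norm_num)]
    norm_num
  have s2 : √(π / (x / 4)) / 2 * S = √2 := by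
    rw [hS, div_mul_eq_mul_div, ← Real.sqrt_mul (by positivity)]
    rw [show π / (x / 4) * (2 * x / π) = 2 ^ 2 * 2 by field_simp; norm_num,
      Real.sqrt_mul (by norm_num), Real.sqrt_sq (by norm_num)]
    ring
  calc |Kim ν x * Real.exp x * S - 1|
      = |Kim ν x * Real.exp x - √(π / (x / 2)) / 2| * S := by
        rw [← abs_of_nonneg hS0, ← abs_mul, abs_of_nonneg hS0, sub_mul, s1]
    _ ≤ ((2 * ν ^ 2 + 32) / x * (√(π / (x / 4)) / 2)) * S := by gcongr
    _ = (2 * ν ^ 2 + 32) / x * (√(π / (x / 4)) / 2 * S) := by ring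
    _ = _ := by rw [s2]; ring

theorem macdonald_asymptotic_at_top (ν : ℝ) :
    Tendsto (fun x : ℝ => Kim ν x * Real.exp x * Real.sqrt (2 * x / π)) atTop (nhds 1) ∧
    (fun x : ℝ => Kim ν x * Real.exp x * Real.sqrt (2 * x / π) - 1) =O[atTop]
      (fun x : ℝ => 1 / x) := by
  have hO : (fun x : ℝ => Kim ν x * Real.exp x * Real.sqrt (2 * x / π) - 1) =O[atTop]
      (fun x : ℝ => 1 / x) := by
    refine IsBigO.of_bound ((2 * ν ^ 2 + 32) * √2) ?_
    filter_upwards [eventually_ge_atTop (1 : ℝ)] with x hx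
    have h0 : (0 : ℝ) ≤ 1 / x := by positivity
    rw [Real.norm_eq_abs, Real.norm_of_nonneg h0]
    exact kim_bound ν x hx
  refine ⟨?_, hO⟩
  have h0 : Tendsto (fun x : ℝ => 1 / x) atTop (nhds 0) := by
    simpa using tendsto_inv_atTop_zero (𝕜 := ℝ)
  have h := (hO.trans_tendsto h0).add_const 1
  simpa using h
end

section
/- For every real ν > 0 there exists a constant C > 0 such that for all x with 0 < x ≤ 1 one has | K_{iν}(x) − √(π/(ν · sinh(πν))) · cos( −ν · log(x/2) + arg Γ(iν) ) | ≤ C · x², where arg Γ(iν) is the argument of the complex number Γ(iν). In particular, as x → 0+, K_{iν}(x) = √(π/(ν sinh(πν))) · cos( −ν log(x/2) + arg Γ(iν) ) + O(x²). -/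
open Real

open MeasureTheory

namespace KimAux

lemma gam_int (a : ℝ) (ha : 0 < a) (s : ℂ) (hs : 0 < s.re) :
    ∫ t : ℝ, Complex.exp (-((a * rexp t : ℝ) : ℂ) + s * t) =
      (1 / (a : ℂ)) ^ s * Complex.Gamma s := by
  rw [← Complex.integral_cpow_mul_exp_neg_mul_Ioi hs ha]
  have him : rexp '' Set.univ = Set.Ioi 0 := by
    rw [Set.image_univ, Real.range_exp]
  rw [← him, integral_image_eq_integral_abs_deriv_smul MeasurableSet.univ
    (fun x _ => (Real.hasDerivAt_exp x).hasDerivWithinAt) (Real.exp_injective.injOn)]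
  rw [Measure.restrict_univ]
  congr 1
  ext t
  rw [abs_of_pos (Real.exp_pos t), Complex.real_smul, Complex.ofReal_exp,
    Complex.cpow_def_of_ne_zero (Complex.exp_ne_zero _), ← Complex.ofReal_exp,
    ← Complex.ofReal_log (Real.exp_pos t).le, Real.log_exp, Complex.ofReal_exp,
    ← Complex.exp_add, ← Complex.exp_add]
  congr 1
  push_cast
  ring

lemma gam_integrable (a : ℝ) (ha : 0 < a) (s : ℂ) (hs : 0 < s.re) :
    Integrable (fun t : ℝ => Complex.exp (-((a * rexp t : ℝ) : ℂ) + s * t)) := by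
  by_contra h
  have h1 := gam_int a ha s hs
  rw [integral_undef h] at h1
  have h2 : (1 / (a : ℂ)) ^ s ≠ 0 := by
    rw [Ne, Complex.cpow_eq_zero_iff]
    simp [ha.ne']
  exact mul_ne_zero h2 (Complex.Gamma_ne_zero_of_re_pos hs) h1.symm

lemma gam_real (a : ℝ) (ha : 0 < a) (σ : ℝ) (hs : 0 < σ) :
    Integrable (fun t : ℝ => rexp (-(a * rexp t) + σ * t)) := by
  have h := (gam_integrable a ha σ (by simpa using hs)).norm
  refine h.congr (Filter.Eventually.of_forall fun t => ?_)
  simp [Complex.norm_exp, -Complex.ofReal_exp, -Complex.ofReal_mul]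

lemma gam_real_one (a : ℝ) (ha : 0 < a) :
    ∫ t : ℝ, rexp (-(a * rexp t) + t) = 1 / a := by
  have h := gam_int a ha 1 (by simp)
  have h2 : ∫ t : ℝ, Complex.exp (-((a * rexp t : ℝ) : ℂ) + 1 * t) =
      ((∫ t : ℝ, rexp (-(a * rexp t) + t) : ℝ) : ℂ) := by
    rw [← integral_complex_ofReal]
    congr 1
    ext t
    push_cast
    simp
  rw [h2] at h
  simp only [Complex.cpow_one, Complex.Gamma_one, mul_one] at h
  exact_mod_cast h

/-- integrand -/
noncomputable def fm (a : ℝ) (s : ℂ) (t : ℝ) : ℂ :=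
  Complex.exp (-((a * (rexp t + rexp (-t)) : ℝ) : ℂ) + s * t)

noncomputable def Fm (a : ℝ) (s : ℂ) : ℂ := ∫ t : ℝ, fm a s t

lemma fm_norm (a : ℝ) (s : ℂ) (t : ℝ) :
    ‖fm a s t‖ = rexp (-(a * (rexp t + rexp (-t))) + s.re * t) := by
  rw [fm, Complex.norm_exp]
  congr 1
  simp [-Complex.ofReal_exp, -Complex.ofReal_mul, -Complex.ofReal_add]

lemma fm_cont (a : ℝ) (s : ℂ) : Continuous (fm a s) := by
  unfold fm
  fun_prop

lemma fm_integrable (a : ℝ) (ha : 0 < a) (s : ℂ) : Integrable (fm a s) := by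
  have h1 := gam_real a ha (|s.re| + 1) (by positivity)
  have h2 := h1.comp_neg
  refine (h1.add h2).mono' (fm_cont a s).aestronglyMeasurable
    (Filter.Eventually.of_forall fun t => ?_)
  rw [fm_norm]
  simp only [Pi.add_apply]
  have e1 := Real.exp_pos t
  have e2 := Real.exp_pos (-t)
  have p1 : 0 < a * rexp t := by positivity
  have p2 : 0 < a * rexp (-t) := by positivity
  rcases le_total 0 t with ht | ht
  · refine le_trans (Real.exp_le_exp.2 ?_) (le_add_of_nonneg_right (Real.exp_pos _).le)
    have : s.re * t ≤ (|s.re| + 1) * t :=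
      mul_le_mul_of_nonneg_right (by linarith [le_abs_self s.re]) ht
    nlinarith
  · refine le_trans (Real.exp_le_exp.2 ?_) (le_add_of_nonneg_left (Real.exp_pos _).le)
    have : (-s.re) * (-t) ≤ (|s.re| + 1) * (-t) :=
      mul_le_mul_of_nonneg_right (by linarith [neg_abs_le s.re]) (by linarith)
    nlinarith

lemma Fm_neg (a : ℝ) (s : ℂ) : Fm a (-s) = Fm a s := by
  unfold Fm
  rw [← integral_neg_eq_self]
  congr 1
  ext t
  unfold fm
  congr 1
  push_cast
  ring_nf

lemma Fm_conj (a : ℝ) (s : ℂ) :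
    Fm a ((starRingEnd ℂ) s) = (starRingEnd ℂ) (Fm a s) := by
  unfold Fm
  rw [← integral_conj]
  congr 1
  ext t
  unfold fm
  rw [← Complex.exp_conj]
  congr 1
  simp only [map_add, map_neg, map_mul, Complex.conj_ofReal]

lemma fm_add_one (a : ℝ) (s : ℂ) (t : ℝ) :
    fm a (s + 1) t = Complex.exp t * fm a s t := by
  unfold fm
  rw [← Complex.exp_add]
  ring_nf

lemma fm_sub_one (a : ℝ) (s : ℂ) (t : ℝ) :
    fm a (s - 1) t = Complex.exp (-t) * fm a s t := by
  unfold fm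
  rw [← Complex.exp_add]
  ring_nf

lemma Fm_rec (a : ℝ) (ha : 0 < a) (s : ℂ) :
    s * Fm a s = a * (Fm a (s + 1) - Fm a (s - 1)) := by
  have i0 := fm_integrable a ha s
  have i1 := fm_integrable a ha (s + 1)
  have i2 := fm_integrable a ha (s - 1)
  have hd : ∀ t : ℝ, HasDerivAt (fm a s)
      (s * fm a s t - a * (fm a (s + 1) t - fm a (s - 1) t)) t := by
    intro t
    have h1 : HasDerivAt (fun t : ℝ => a * (rexp t + rexp (-t)))
        (a * (rexp t + rexp (-t) * (-1))) t :=
      ((Real.hasDerivAt_exp t).add ((hasDerivAt_neg t).exp)).const_mul a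
    have h2 : HasDerivAt (fun t : ℝ => s * (t : ℂ)) (s * 1) t :=
      ((hasDerivAt_id t).ofReal_comp).const_mul s
    have h3 := ((h1.ofReal_comp.neg).add h2).cexp
    refine h3.congr_deriv ?_
    rw [fm_add_one, fm_sub_one]
    have : fm a s t = Complex.exp (-((a * (rexp t + rexp (-t)) : ℝ) : ℂ) + s * t) := rfl
    simp only [Pi.add_apply, Pi.neg_apply]
    rw [← this]
    push_cast
    ring
  have h := integral_eq_zero_of_hasDerivAt_of_integrable hd
    ((i0.const_mul s).sub ((i1.sub i2).const_mul (a : ℂ))) i0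
  have h' : ∫ t, (s * fm a s t - a * (fm a (s + 1) t - fm a (s - 1) t)) =
      s * Fm a s - a * (Fm a (s + 1) - Fm a (s - 1)) := by
    have i12 : Integrable (fun t => (a : ℂ) * (fm a (s + 1) t - fm a (s - 1) t)) :=
      (i1.sub i2).const_mul (a : ℂ)
    rw [integral_sub (i0.const_mul s) i12,
      integral_const_mul, integral_const_mul, integral_sub i1 i2]
    rfl
  rw [h'] at h
  exact sub_eq_zero.1 h

lemma Fm_one_bound (a : ℝ) (ha : 0 < a) (s : ℂ) (hs : s.re = 1) : ‖Fm a s‖ ≤ 1 / a := by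
  rw [← gam_real_one a ha]
  have i : Integrable (fun t : ℝ => rexp (-(a * rexp t) + t)) := by
    simpa using gam_real a ha 1 one_pos
  refine norm_integral_le_of_norm_le i (Filter.Eventually.of_forall fun t => ?_)
  rw [fm_norm, hs]
  apply Real.exp_le_exp.2
  have : 0 < a * rexp (-t) := by positivity
  linarith

lemma Fm_two_bound (a : ℝ) (ha : 0 < a) (s : ℂ) (hs : s.re = 2) :
    ‖Fm a s - (1 / (a : ℂ)) ^ s * Complex.Gamma s‖ ≤ 1 := by
  have hs' : 0 < s.re := by rw [hs]; norm_num
  have h1 : ∫ t : ℝ, a * rexp (-(a * rexp t) + t) = 1 := by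
    rw [integral_const_mul, gam_real_one a ha]; field_simp
  have i : Integrable (fun t : ℝ => rexp (-(a * rexp t) + t)) := by
    simpa using gam_real a ha 1 one_pos
  rw [← gam_int a ha s hs', Fm,
    ← integral_sub (fm_integrable a ha s) (gam_integrable a ha s hs')]
  refine le_trans (norm_integral_le_of_norm_le (i.const_mul a)
    (Filter.Eventually.of_forall fun t => ?_)) h1.le
  have e : fm a s t - Complex.exp (-((a * rexp t : ℝ) : ℂ) + s * t) =
      ((rexp (-(a * rexp (-t))) - 1 : ℝ) : ℂ) *
        Complex.exp (-((a * rexp t : ℝ) : ℂ) + s * t) := by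
    unfold fm
    have : (-((a * (rexp t + rexp (-t)) : ℝ) : ℂ) + s * t) =
      ((-(a * rexp (-t)) : ℝ) : ℂ) + (-((a * rexp t : ℝ) : ℂ) + s * t) := by
      push_cast; ring
    rw [this, Complex.exp_add]
    push_cast
    ring
  rw [e, norm_mul, Complex.norm_exp, Complex.norm_real, Real.norm_eq_abs]
  have hre : (-((a * rexp t : ℝ) : ℂ) + s * t).re = -(a * rexp t) + 2 * t := by
    simp [-Complex.ofReal_exp, -Complex.ofReal_mul, hs]
  rw [hre]
  have p : 0 < a * rexp (-t) := by positivity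
  have b1 : |rexp (-(a * rexp (-t))) - 1| ≤ a * rexp (-t) := by
    rw [abs_le]
    constructor
    · linarith [Real.add_one_le_exp (-(a * rexp (-t)))]
    · have : rexp (-(a * rexp (-t))) ≤ 1 := Real.exp_le_one_iff.2 (by linarith)
      linarith
  calc _ ≤ a * rexp (-t) * rexp (-(a * rexp t) + 2 * t) := by gcongr
    _ = _ := by
      rw [mul_assoc, ← Real.exp_add]
      ring_nf

lemma Kim_eq (ν x : ℝ) (hx : 0 < x) : Kim ν x = (Fm (x / 2) (ν * Complex.I)).re / 2 := by
  have h := integral_comp_abs (f := fun t => rexp (-x * Real.cosh t) * Real.cos (ν * t))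
  have h2 : (Fm (x / 2) (ν * Complex.I)).re =
      ∫ t : ℝ, rexp (-x * Real.cosh |t|) * Real.cos (ν * |t|) := by
    have h3 := integral_re (fm_integrable (x / 2) (by positivity) (ν * Complex.I))
    have h4 : (Fm (x / 2) (ν * Complex.I)).re =
      ∫ t : ℝ, RCLike.re (fm (x / 2) (ν * Complex.I) t) := h3.symm
    rw [h4]
    congr 1
    ext t
    have : Real.cos (ν * |t|) = Real.cos (ν * t) := by
      rcases abs_choice t with h | h <;> rw [h] <;> simp
    rw [Real.cosh_abs, this]
    have e : fm (x / 2) (ν * Complex.I) t =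
        Complex.exp ((-x * Real.cosh t : ℝ) + (ν * t : ℝ) * Complex.I) := by
      unfold fm
      congr 1
      rw [Real.cosh_eq]
      push_cast
      ring
    rw [e, Complex.exp_add, ← Complex.ofReal_exp]
    change (_ : ℂ).re = _
    rw [Complex.re_ofReal_mul, Complex.exp_ofReal_mul_I_re]
  rw [h2, h, Kim]
  ring

lemma norm_Gamma (ν : ℝ) (hν : 0 < ν) :
    ‖Complex.Gamma (ν * Complex.I)‖ = Real.sqrt (π / (ν * Real.sinh (π * ν))) := by
  have hs : 0 < Real.sinh (π * ν) := Real.sinh_pos_iff.2 (by positivity)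
  have hne : (ν : ℂ) * Complex.I ≠ 0 := by simp [hν.ne']
  symm
  rw [Real.sqrt_eq_iff_mul_self_eq (by positivity) (norm_nonneg _)]
  have h := Complex.Gamma_mul_Gamma_one_sub (ν * Complex.I)
  have hc : Complex.Gamma (1 - ν * Complex.I) =
      (-(ν * Complex.I)) * (starRingEnd ℂ) (Complex.Gamma (ν * Complex.I)) := by
    rw [← Complex.Gamma_conj]
    have : (starRingEnd ℂ) (ν * Complex.I) = -(ν * Complex.I) := by simp
    rw [this, ← Complex.Gamma_add_one _ (neg_ne_zero.2 hne)]
    ring_nf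
  have h5 := congrArg (fun z => ‖z‖) h
  simp only [hc, norm_mul, norm_div, norm_neg, RCLike.norm_conj, Complex.norm_real,
    Complex.norm_I, Real.norm_eq_abs, abs_of_pos hν, abs_of_pos Real.pi_pos] at h5
  rw [← mul_assoc (π : ℂ), ← Complex.ofReal_mul, Complex.sin_mul_I, norm_mul, ← Complex.ofReal_sinh,
    Complex.norm_real, Complex.norm_I, Real.norm_eq_abs, abs_of_pos hs] at h5
  field_simp at h5 ⊢
  linarith

lemma main_term (ν : ℝ) (hν : 0 < ν) (a : ℝ) (ha : 0 < a) :
    Real.sqrt (π / (ν * Real.sinh (π * ν))) *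
        Real.cos (-ν * Real.log a + Complex.arg (Complex.Gamma (ν * Complex.I))) =
    ((1 / (a : ℂ)) ^ (ν * Complex.I) * Complex.Gamma (ν * Complex.I)).re := by
  rw [← norm_Gamma ν hν]
  set G := Complex.Gamma (ν * Complex.I) with hG
  have h1 : (1 / (a : ℂ)) ^ (ν * Complex.I) = Complex.exp (((-ν * Real.log a : ℝ)) * Complex.I) := by
    rw [Complex.cpow_def_of_ne_zero (by simp [ha.ne'])]
    have : (1 / (a : ℂ)) = ((1 / a : ℝ) : ℂ) := by push_cast; rfl
    rw [this, ← Complex.ofReal_log (by positivity)]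
    rw [one_div, Real.log_inv]
    congr 1
    push_cast
    ring
  have h2 : (1 / (a : ℂ)) ^ (ν * Complex.I) * G = (‖G‖ : ℂ) *
      Complex.exp (((-ν * Real.log a + Complex.arg G : ℝ)) * Complex.I) := by
    rw [h1]
    nth_rw 1 [← Complex.norm_mul_exp_arg_mul_I G]
    push_cast
    rw [add_mul, Complex.exp_add]
    ring
  rw [h2, Complex.re_ofReal_mul, Complex.exp_ofReal_mul_I_re]

end KimAux

open KimAux in
theorem macdonald_asymptotic_at_zero (ν : ℝ) (hν : 0 < ν) :
    ∃ C > 0, ∀ x : ℝ, 0 < x → x ≤ 1 →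
      |Kim ν x - Real.sqrt (π / (ν * Real.sinh (π * ν))) *
        Real.cos (-ν * Real.log (x / 2) + Complex.arg (Complex.Gamma (ν * Complex.I)))|
        ≤ C * x ^ 2 := by
  refine ⟨(1 + 2 / ν) / ν, by positivity, fun x hx _ => ?_⟩
  have ha : 0 < x / 2 := by positivity
  rw [main_term ν hν _ ha, Kim_eq ν x hx]
  have hxa : x = 2 * (x / 2) := by ring
  generalize x / 2 = a at ha hxa ⊢
  subst hxa
  set s : ℂ := ν * Complex.I with hsdef
  have hs0 : s ≠ 0 := by simp [hsdef, hν.ne']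
  have hsre : s.re = 0 := by simp [hsdef]
  have hac : (a : ℂ) ≠ 0 := by exact_mod_cast ha.ne'
  have hs1 : s + 1 ≠ 0 := by
    intro h
    have := congrArg Complex.re h
    simp [hsre] at this
  have r0 := Fm_rec a ha s
  have r1 := Fm_rec a ha (s + 1)
  have hcj : Fm a (s - 1) = (starRingEnd ℂ) (Fm a (s + 1)) := by
    rw [← Fm_conj, ← Fm_neg]
    congr 1
    simp [hsdef]
    ring
  have b1 := Fm_one_bound a ha (s + 1) (by simp [hsre])
  have b2 := Fm_two_bound a ha (s + 1 + 1) (by simp [hsre]; norm_num)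
  have hg : (1 / (a : ℂ)) ^ (s + 1 + 1) * Complex.Gamma (s + 1 + 1) =
      (s + 1) * s * ((1 / (a : ℂ)) ^ s * Complex.Gamma s) / a ^ 2 := by
    rw [Complex.Gamma_add_one _ hs1, Complex.Gamma_add_one _ hs0,
      Complex.cpow_add _ _ (by simp [hac]), Complex.cpow_add _ _ (by simp [hac]), Complex.cpow_one]
    field_simp
  rw [hg] at b2
  rw [show s + 1 - 1 = s by ring] at r1
  set M := (1 / (a : ℂ)) ^ s * Complex.Gamma s with hM
  set E := Fm a (s + 1 + 1) - (s + 1) * s * M / a ^ 2 with hE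
  have hF2 : Fm a (s + 1 + 1) = (s + 1) * s * M / a ^ 2 + E := by rw [hE]; ring
  rw [hF2] at r1
  rw [hcj, Complex.sub_conj] at r0
  -- F0 is small
  have hF0 : Fm a s = ((2 * a * (Fm a (s + 1)).im / ν : ℝ) : ℂ) := by
    have hνc : (ν : ℂ) ≠ 0 := by exact_mod_cast hν.ne'
    apply mul_left_cancel₀ hs0
    rw [r0, hsdef]
    push_cast
    field_simp
  have hF0b : ‖Fm a s‖ ≤ 2 / ν := by
    rw [hF0, Complex.norm_real, Real.norm_eq_abs, abs_div, abs_mul, abs_of_pos hν,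
      abs_of_pos (by positivity : 0 < 2 * a)]
    have := (Complex.abs_im_le_norm _).trans b1
    rw [div_le_div_iff_of_pos_right hν]
    calc 2 * a * _ ≤ 2 * a * (1 / a) := by gcongr
      _ = 2 := by field_simp
  have hF1 : (a : ℂ) * Fm a (s + 1) = s * M + a ^ 2 * ((E - Fm a s) / (s + 1)) := by
    apply mul_left_cancel₀ hs1
    calc (s + 1) * (a * Fm a (s + 1)) = a * ((s + 1) * Fm a (s + 1)) := by ring
      _ = _ := by rw [r1]; field_simp; ring
  set R := (E - Fm a s) / (s + 1) with hR
  have hRb : ‖R‖ ≤ 1 + 2 / ν := by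
    have h1 : 1 ≤ ‖s + 1‖ := by
      have := Complex.abs_re_le_norm (s + 1)
      simpa [hsre] using this
    rw [hR, norm_div]
    refine (div_le_self (norm_nonneg _) h1).trans ?_
    exact (norm_sub_le _ _).trans (add_le_add b2 hF0b)
  have him : a * (Fm a (s + 1)).im = ν * M.re + a ^ 2 * R.im := by
    have := congrArg Complex.im hF1
    rw [Complex.im_ofReal_mul, Complex.add_im, ← Complex.ofReal_pow, Complex.im_ofReal_mul] at this
    rw [this, hsdef, mul_assoc, Complex.im_ofReal_mul]
    simp
  have hfin : (Fm a s).re / 2 - M.re = a ^ 2 * R.im / ν := by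
    rw [hF0, Complex.ofReal_re]
    have : 2 * a * (Fm a (s + 1)).im = 2 * (ν * M.re + a ^ 2 * R.im) := by rw [← him]; ring
    rw [this]
    field_simp
    ring
  rw [hfin, abs_div, abs_mul, abs_of_pos hν, abs_of_pos (by positivity : 0 < a ^ 2)]
  have hR2 := (Complex.abs_im_le_norm R).trans hRb
  rw [div_mul_eq_mul_div, div_le_div_iff_of_pos_right hν]
  have : 0 ≤ (1 + 2 / ν) * a ^ 2 := by positivity
  calc a ^ 2 * |R.im| ≤ a ^ 2 * (1 + 2 / ν) := by gcongr
    _ ≤ _ := by nlinarith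
end

section
/- For every real ν > 0 there exists a constant C > 0 such that for all x with 0 < x ≤ 1 one has | x · K_{iν}'(x) − ν · √(π/(ν · sinh(πν))) · sin( −ν · log(x/2) + arg Γ(iν) ) | ≤ C · x², where K_{iν}' denotes the derivative of K_{iν} with respect to x. -/
open Real

open MeasureTheory Filter Topology

lemma lemC (ν : ℝ) (hν : 0 < ν) : ‖Complex.Gamma (ν * Complex.I)‖ = Real.sqrt (π / (ν * Real.sinh (π * ν))) := by
  have h1 := Complex.Gamma_mul_Gamma_one_sub (ν * Complex.I)
  have hne : -(ν * Complex.I) ≠ 0 := by simp [hν.ne']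
  have h2 : Complex.Gamma (1 - ν * Complex.I) = -(ν * Complex.I) * (starRingEnd ℂ) (Complex.Gamma (ν * Complex.I)) := by
    rw [← Complex.Gamma_conj, show (1 - ν * Complex.I : ℂ) = -(ν * Complex.I) + 1 by ring,
      Complex.Gamma_add_one _ hne]
    simp
  have h3 : Complex.sin (π * (ν * Complex.I)) = (Real.sinh (π * ν) : ℝ) * Complex.I := by
    rw [← mul_assoc, Complex.sin_mul_I]; push_cast; rfl
  have hs : 0 < Real.sinh (π * ν) := Real.sinh_pos_iff.2 (by positivity)
  rw [h2, h3] at h1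
  have h4 := congrArg norm h1
  simp only [norm_mul, norm_neg, norm_div, Complex.norm_I, Complex.norm_real, RCLike.norm_conj,
    Real.norm_eq_abs, abs_of_pos hs, abs_of_pos hν, abs_of_pos pi_pos] at h4
  rw [eq_comm, Real.sqrt_eq_iff_mul_self_eq_of_pos]
  · field_simp at h4 ⊢
    linarith
  · apply norm_pos_iff.2
    intro h0
    rw [h0] at h4
    simp only [norm_zero, zero_mul, mul_one] at h4
    exact (by positivity : π / Real.sinh (π * ν) ≠ 0) h4.symm

lemma intB (ν c : ℝ) : IntegrableOn (fun u : ℝ => Real.exp (-u) * Real.cos (ν * Real.log u + c)) (Set.Ioi 0) := by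
  have := exp_neg_integrableOn_Ioi 0 (b := 1) one_pos
  refine Integrable.mono' this ?_ ?_
  · exact (by fun_prop : Measurable _).aestronglyMeasurable
  · refine ae_of_all _ fun u => ?_
    rw [norm_mul]
    simp only [Real.norm_eq_abs, Real.abs_exp, neg_mul, one_mul]
    exact mul_le_of_le_one_right (Real.exp_pos _).le (Real.abs_cos_le_one _)

lemma lemB (ν c : ℝ) (hν : 0 < ν) :
    ∫ u in Set.Ioi (0:ℝ), Real.exp (-u) * Real.cos (ν * Real.log u + c) =
    - (ν * ‖Complex.Gamma (ν * Complex.I)‖ * Real.sin (c + Complex.arg (Complex.Gamma (ν * Complex.I)))) := by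
  have hne : (ν * Complex.I : ℂ) ≠ 0 := by simp [hν.ne']
  have h1 := Complex.Gamma_add_one _ hne
  rw [Complex.Gamma_eq_integral (by simp)] at h1
  have hc := Complex.GammaIntegral_convergent (s := ν * Complex.I + 1) (by simp)
  unfold Complex.GammaIntegral at h1
  have h2 : ∫ u in Set.Ioi (0:ℝ), Real.exp (-u) * Real.cos (ν * Real.log u + c) =
      (Complex.exp (c * Complex.I) * (∫ u in Set.Ioi (0:ℝ), (Real.exp (-u) : ℝ) * (u:ℂ) ^ (ν * Complex.I + 1 - 1))).re := by
    rw [← integral_const_mul, ← RCLike.re_eq_complex_re, ← integral_re]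
    · refine setIntegral_congr_fun measurableSet_Ioi fun u hu => ?_
      have hu' : (u:ℂ) ≠ 0 := by simpa using (ne_of_gt hu)
      simp only [add_sub_cancel_right, RCLike.re_eq_complex_re]
      rw [Complex.cpow_def_of_ne_zero hu', ← Complex.ofReal_log (le_of_lt hu), mul_left_comm,
        Complex.re_ofReal_mul, ← Complex.exp_add, show (c * Complex.I + (Real.log u : ℝ) * (ν * Complex.I) : ℂ) = ((ν * Real.log u + c : ℝ) : ℂ) * Complex.I by push_cast; ring,
        Complex.exp_ofReal_mul_I_re]
    · exact hc.const_mul _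
  rw [h2, h1]
  have h5 := (Complex.norm_mul_exp_arg_mul_I (Complex.Gamma (ν * Complex.I))).symm
  set G := Complex.Gamma (ν * Complex.I)
  have : Complex.exp (c * Complex.I) * (ν * Complex.I * G) = ((ν * ‖G‖ : ℝ) : ℂ) * (Complex.I * Complex.exp (((c + G.arg : ℝ) : ℂ) * Complex.I)) := by
    conv_lhs => rw [h5]
    push_cast
    rw [add_mul, Complex.exp_add]; ring
  rw [this, Complex.re_ofReal_mul, Complex.I_mul_re, Complex.exp_ofReal_mul_I_im]
  ring

lemma intA (ν c a : ℝ) (ha : 0 < a) : IntegrableOn (fun u : ℝ => Real.exp (-u - a / u) * Real.cos (ν * Real.log u + c)) (Set.Ioi 0) := by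
  have := exp_neg_integrableOn_Ioi 0 (b := 1) one_pos
  refine Integrable.mono' this ?_ ?_
  · exact (by fun_prop : Measurable _).aestronglyMeasurable
  · refine (ae_restrict_iff' measurableSet_Ioi).2 (ae_of_all _ fun u hu => ?_)
    have hu : 0 < u := hu
    have : 0 < a / u := by positivity
    rw [norm_mul]
    simp only [Real.norm_eq_abs, Real.abs_exp]
    refine (mul_le_of_le_one_right (Real.exp_pos _).le (Real.abs_cos_le_one _)).trans ?_
    exact Real.exp_le_exp.2 (by linarith)

lemma lemA (ν c a : ℝ) (hν : 0 < ν) (ha : 0 < a) :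
    |(∫ u in Set.Ioi (0:ℝ), Real.exp (-u - a / u) * Real.cos (ν * Real.log u + c)) -
      ∫ u in Set.Ioi (0:ℝ), Real.exp (-u) * Real.cos (ν * Real.log u + c)| ≤ 2 * a / ν := by
  rw [← integral_sub (intA ν c a ha) (intB ν c)]
  set h : ℝ → ℝ := fun u => u * (Real.exp (-a / u) - 1) with hh
  set h' : ℝ → ℝ := fun u => (Real.exp (-a / u) - 1) + (a / u) * Real.exp (-a / u) with hh'
  have hd : ∀ u ∈ Set.Ioi (0:ℝ), HasDerivAt h (h' u) u := by
    intro u hu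
    have hu : 0 < u := hu
    have h1 : HasDerivAt (fun u : ℝ => -a / u) (a / u ^ 2) u := by
      have := (hasDerivAt_inv hu.ne').const_mul (-a)
      refine this.congr_deriv ?_
      field_simp
    have := (hasDerivAt_id u).mul ((h1.exp).sub_const 1)
    refine this.congr_deriv ?_
    simp only [hh', id]
    field_simp
  have hneg : ∀ u ∈ Set.Ioi (0:ℝ), h' u ≤ 0 := by
    intro u hu
    have h1 := Real.add_one_le_exp (a / u)
    have h2 : Real.exp (-a / u) * Real.exp (a / u) = 1 := by
      rw [← Real.exp_add, neg_div, neg_add_cancel, Real.exp_zero]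
    simp only [hh']
    nlinarith [Real.exp_pos (-a / u)]
  have hle0 : ∀ u, 0 ≤ u → h u ≤ 0 := by
    intro u hu
    have : Real.exp (-a / u) ≤ 1 := Real.exp_le_one_iff.2 (by rw [neg_div]; simp; positivity)
    simp only [hh]
    nlinarith
  have hgeu : ∀ u, 0 ≤ u → -u ≤ h u := by
    intro u hu
    simp only [hh]
    nlinarith [Real.exp_pos (-a / u)]
  have hgea : ∀ u, 0 < u → -a ≤ h u := by
    intro u hu
    have h1 := Real.add_one_le_exp (-a / u)
    have h2 : u * (-a / u) = -a := by field_simp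
    simp only [hh]
    nlinarith
  have h0 : h 0 = 0 := by simp [hh]
  have hlim0 : Tendsto h (𝓝[≥] 0) (𝓝 0) := by
    refine tendsto_of_tendsto_of_tendsto_of_le_of_le' (g := fun u : ℝ => -u) (h := fun _ => 0) ?_ tendsto_const_nhds ?_ ?_
    · have : Tendsto (fun u : ℝ => -u) (𝓝 0) (𝓝 (-0)) := (continuous_neg.tendsto _)
      rw [neg_zero] at this
      exact this.mono_left nhdsWithin_le_nhds
    · exact eventually_mem_nhdsWithin.mono fun u hu => hgeu u hu
    · exact eventually_mem_nhdsWithin.mono fun u hu => hle0 u hu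
  have hcont : ContinuousWithinAt h (Set.Ici 0) 0 := by
    unfold ContinuousWithinAt
    rw [h0]; exact hlim0
  have hlimT : Tendsto h atTop (𝓝 (-a)) := by
    have h1 : HasDerivAt (fun s : ℝ => Real.exp (-a * s)) (-a) 0 := by
      have := ((hasDerivAt_id (0:ℝ)).const_mul (-a)).exp
      simpa using this
    have h2 := h1.tendsto_slope_zero_right.comp tendsto_inv_atTop_nhdsGT_zero
    refine h2.congr fun u => ?_
    simp [hh, div_eq_mul_inv]
  have hint := integrableOn_Ioi_deriv_of_nonpos hcont hd hneg hlimT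
  have hval := integral_Ioi_of_hasDerivAt_of_nonpos hcont hd hneg hlimT
  rw [h0, sub_zero] at hval
  have hE : IntegrableOn (fun u : ℝ => a * Real.exp (-u)) (Set.Ioi 0) := by
    have := (exp_neg_integrableOn_Ioi 0 (b := 1) one_pos).const_mul a
    simpa [IntegrableOn] using this
  have hB : IntegrableOn (fun u => a * Real.exp (-u) - h' u) (Set.Ioi 0) := hE.sub hint
  set R : ℝ → ℝ := fun u => (-Real.exp (-u) * h u + Real.exp (-u) * h' u) * Real.sin (ν * Real.log u + c) with hR
  have hRb : ∀ u ∈ Set.Ioi (0:ℝ), ‖R u‖ ≤ a * Real.exp (-u) - h' u := by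
    intro u hu
    have hu : 0 < u := hu
    have h1 := hneg u hu
    have h2 := hgea u hu
    have h3 := hle0 u hu.le
    have h4 : Real.exp (-u) ≤ 1 := Real.exp_le_one_iff.2 (by linarith)
    have h5 := Real.exp_pos (-u)
    rw [hR, norm_mul]
    refine (mul_le_of_le_one_right (norm_nonneg _) (Real.abs_sin_le_one _)).trans ?_
    rw [Real.norm_eq_abs, abs_le]
    constructor <;> nlinarith
  have hRint : IntegrableOn R (Set.Ioi 0) := by
    refine Integrable.mono' hB ?_ ((ae_restrict_iff' measurableSet_Ioi).2 (ae_of_all _ hRb))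
    exact (by fun_prop : Measurable _).aestronglyMeasurable
  have hD := (intA ν c a ha).sub (intB ν c)
  set Q : ℝ → ℝ := fun u => Real.exp (-u) * h u * Real.sin (ν * Real.log u + c) with hQ
  set D : ℝ → ℝ := fun u => Real.exp (-u - a / u) * Real.cos (ν * Real.log u + c) - Real.exp (-u) * Real.cos (ν * Real.log u + c) with hDdef
  have hD' : IntegrableOn D (Set.Ioi 0) := hD
  have hQd : ∀ u ∈ Set.Ioi (0:ℝ), HasDerivAt Q (R u + ν * D u) u := by
    intro u hu
    have hu' : 0 < u := hu
    have h1 := ((hasDerivAt_neg u).exp).mul (hd u hu)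
    have h2 := (((Real.hasDerivAt_log hu'.ne').const_mul ν).add_const c).sin
    have := h1.mul h2
    refine this.congr_deriv ?_
    simp only [hR, hDdef, hh, sub_eq_add_neg, Real.exp_add, ← neg_div, Pi.mul_apply]
    field_simp
  have hQ0 : Q 0 = 0 := by simp [hQ, h0]
  have hQc : ContinuousWithinAt Q (Set.Ici 0) 0 := by
    unfold ContinuousWithinAt
    rw [hQ0]
    refine squeeze_zero_norm' ?_ (by simpa using hlim0.norm)
    filter_upwards [eventually_mem_nhdsWithin] with u hu
    have hu : 0 ≤ u := hu
    have h4 : Real.exp (-u) ≤ 1 := Real.exp_le_one_iff.2 (by linarith)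
    rw [hQ, norm_mul, norm_mul]
    refine (mul_le_of_le_one_right (by positivity) (Real.abs_sin_le_one _)).trans ?_
    refine mul_le_of_le_one_left (norm_nonneg _) ?_
    simpa using hu
  have hQT : Tendsto Q atTop (𝓝 0) := by
    have h1 : Tendsto (fun u : ℝ => Real.exp (-u) * a) atTop (𝓝 (0 * a)) :=
      (Real.tendsto_exp_neg_atTop_nhds_zero).mul_const a
    rw [zero_mul] at h1
    refine squeeze_zero_norm' ?_ h1
    filter_upwards [eventually_gt_atTop 0] with u hu
    rw [hQ, norm_mul, norm_mul]
    refine (mul_le_of_le_one_right (by positivity) (Real.abs_sin_le_one _)).trans ?_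
    rw [Real.norm_eq_abs, Real.abs_exp]
    refine mul_le_mul_of_nonneg_left ?_ (Real.exp_pos _).le
    rw [Real.norm_eq_abs, abs_le]
    exact ⟨hgea u hu, (hle0 u hu.le).trans ha.le⟩
  have key := integral_Ioi_of_hasDerivAt_of_tendsto hQc hQd (hRint.add (hD'.const_mul ν)) hQT
  rw [hQ0, sub_zero, integral_add hRint (hD'.const_mul ν), integral_const_mul] at key
  have hRn : ‖∫ u in Set.Ioi (0:ℝ), R u‖ ≤ 2 * a := by
    refine (norm_integral_le_of_norm_le hB ((ae_restrict_iff' measurableSet_Ioi).2 (ae_of_all _ hRb))).trans ?_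
    rw [integral_sub hE hint, hval, integral_const_mul, integral_exp_neg_Ioi_zero]
    linarith
  rw [le_div_iff₀ hν]
  rw [Real.norm_eq_abs] at hRn
  calc _ = |ν * ∫ u in Set.Ioi (0:ℝ), D u| := by rw [abs_mul, abs_of_pos hν, mul_comm]
    _ = |∫ u in Set.Ioi (0:ℝ), R u| := by
      rw [← abs_neg]; congr 1; linarith
    _ ≤ _ := hRn

lemma coshInt (b : ℝ) (hb : 0 < b) : IntegrableOn (fun t : ℝ => Real.cosh t * Real.exp (-b * Real.cosh t)) (Set.Ioi 0) := by
  have := (exp_neg_integrableOn_Ioi 0 (b := b / 4) (by positivity)).const_mul (2 / b)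
  refine Integrable.mono' this ?_ ?_
  · exact (by fun_prop : Measurable _).aestronglyMeasurable
  · refine (ae_restrict_iff' measurableSet_Ioi).2 (ae_of_all _ fun t ht => ?_)
    have ht : 0 < t := ht
    have h1 : t / 2 ≤ Real.cosh t := by
      rw [Real.cosh_eq]
      linarith [Real.add_one_le_exp t, Real.exp_pos (-t)]
    have h2 := Real.add_one_le_exp (b / 2 * Real.cosh t)
    have h3 := Real.cosh_pos t
    rw [Real.norm_eq_abs, abs_of_pos (by positivity)]
    calc Real.cosh t * Real.exp (-b * Real.cosh t)
        = (2 / b) * ((b / 2 * Real.cosh t) * Real.exp (-b * Real.cosh t)) := by field_simp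
      _ ≤ (2 / b) * (Real.exp (b / 2 * Real.cosh t) * Real.exp (-b * Real.cosh t)) := by
        gcongr; linarith
      _ = (2 / b) * Real.exp (- (b / 2) * Real.cosh t) := by
        rw [← Real.exp_add]; congr 2; ring
      _ ≤ _ := by
        refine mul_le_mul_of_nonneg_left (Real.exp_le_exp.2 ?_) (by positivity)
        nlinarith

lemma derivK (ν x : ℝ) (hx : 0 < x) : HasDerivAt (Kim ν)
    (∫ t in Set.Ioi (0:ℝ), -(Real.cosh t * Real.exp (-x * Real.cosh t) * Real.cos (ν * t))) x := by
  unfold Kim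
  refine (hasDerivAt_integral_of_dominated_loc_of_deriv_le (μ := volume.restrict (Set.Ioi (0:ℝ)))
    (F := fun x t => Real.exp (-x * Real.cosh t) * Real.cos (ν * t))
    (F' := fun x t => -(Real.cosh t * Real.exp (-x * Real.cosh t) * Real.cos (ν * t)))
    (s := Set.Ioi (x / 2)) (bound := fun t => Real.cosh t * Real.exp (-(x / 2) * Real.cosh t))
    (Ioi_mem_nhds (by linarith)) ?_ ?_ ?_ ?_ (coshInt _ (by positivity)) ?_).2
  · exact Eventually.of_forall fun y => (by fun_prop : Measurable _).aestronglyMeasurable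
  · refine Integrable.mono' (coshInt x hx) (by fun_prop : Measurable _).aestronglyMeasurable (ae_of_all _ fun t => ?_)
    rw [norm_mul]
    refine (mul_le_of_le_one_right (norm_nonneg _) (Real.abs_cos_le_one _)).trans ?_
    rw [Real.norm_eq_abs, Real.abs_exp]
    exact le_mul_of_one_le_left (Real.exp_pos _).le (Real.one_le_cosh t)
  · exact (by fun_prop : Measurable _).aestronglyMeasurable
  · refine ae_of_all _ fun t y hy => ?_
    have hy : x / 2 < y := hy
    have h3 := Real.cosh_pos t
    rw [norm_neg, norm_mul]
    refine (mul_le_of_le_one_right (norm_nonneg _) (Real.abs_cos_le_one _)).trans ?_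
    rw [Real.norm_eq_abs, abs_of_pos (by positivity)]
    gcongr
  · refine ae_of_all _ fun t y hy => ?_
    have := (((hasDerivAt_neg y).mul_const (Real.cosh t)).exp).mul_const (Real.cos (ν * t))
    refine this.congr_deriv ?_
    ring

lemma lemD (ν x : ℝ) (hx : 0 < x) : x * deriv (Kim ν) x =
    - ∫ u in Set.Ioi (0:ℝ), Real.exp (-u - (x ^ 2 / 4) / u) * Real.cos (ν * Real.log u + (-ν * Real.log (x / 2))) := by
  rw [(derivK ν x hx).deriv, integral_neg, mul_neg]
  congr 1
  set g : ℝ → ℝ := fun u => Real.exp (-u - (x ^ 2 / 4) / u) * Real.cos (ν * Real.log u + (-ν * Real.log (x / 2))) with hg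
  have hgi : IntegrableOn g (Set.Ioi 0) := intA ν _ (x ^ 2 / 4) (by positivity)
  have himg : (fun t : ℝ => (x / 2) * Real.exp t) '' Set.univ = Set.Ioi 0 := by
    ext u
    simp only [Set.image_univ, Set.mem_range, Set.mem_Ioi]
    constructor
    · rintro ⟨t, rfl⟩; positivity
    · intro hu
      refine ⟨Real.log (u / (x / 2)), ?_⟩
      rw [Real.exp_log (by positivity)]; field_simp
  have hder : ∀ t ∈ Set.univ, HasDerivWithinAt (fun t : ℝ => (x / 2) * Real.exp t) ((x / 2) * Real.exp t) Set.univ t :=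
    fun t _ => ((Real.hasDerivAt_exp t).const_mul _).hasDerivWithinAt
  have hinj : Set.InjOn (fun t : ℝ => (x / 2) * Real.exp t) Set.univ := by
    intro s _ t _ hst
    have : x / 2 ≠ 0 := by positivity
    exact Real.exp_injective (mul_left_cancel₀ this hst)
  have e1 := integral_image_eq_integral_abs_deriv_smul MeasurableSet.univ hder hinj g
  have e2 := integrableOn_image_iff_integrableOn_abs_deriv_smul MeasurableSet.univ hder hinj g
  set G : ℝ → ℝ := fun t => (x / 2) * Real.exp t * (Real.exp (-x * Real.cosh t) * Real.cos (ν * t)) with hG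
  have hGe : (fun t : ℝ => |x / 2 * Real.exp t| • g (x / 2 * Real.exp t)) = G := by
    funext t
    rw [abs_of_pos (by positivity), smul_eq_mul, hG, hg]
    simp only
    rw [Real.log_mul (by positivity) (by positivity), Real.log_exp]
    congr 3
    · rw [Real.cosh_eq, Real.exp_neg]; field_simp; ring
    · ring
  rw [himg] at e1 e2
  simp only [hGe] at e1 e2
  have hGi := e2.1 hgi
  rw [e1, setIntegral_univ, ← integral_const_mul]
  rw [integrableOn_univ] at hGi
  rw [← intervalIntegral.integral_Iic_add_Ioi (b := 0) hGi.integrableOn hGi.integrableOn]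
  have e3 := integral_comp_neg_Iic (0:ℝ) (fun t => G (-t))
  simp only [neg_neg, neg_zero] at e3
  rw [e3, ← integral_add hGi.comp_neg.integrableOn hGi.integrableOn]
  refine integral_congr_ae (ae_of_all _ fun t => ?_)
  simp only [hG, Real.cosh_neg, mul_neg, Real.cos_neg]
  rw [Real.cosh_eq t]
  ring

theorem macdonald_deriv_asymptotic_at_zero (ν : ℝ) (hν : 0 < ν) :
    ∃ C > 0, ∀ x : ℝ, 0 < x → x ≤ 1 →
      |x * deriv (Kim ν) x - ν * Real.sqrt (π / (ν * Real.sinh (π * ν))) *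
        Real.sin (-ν * Real.log (x / 2) + Complex.arg (Complex.Gamma (ν * Complex.I)))|
        ≤ C * x ^ 2 := by
  refine ⟨1 / (2 * ν), by positivity, fun x hx _ => ?_⟩
  have hA := lemA ν (-ν * Real.log (x / 2)) (x ^ 2 / 4) hν (by positivity)
  have hB := lemB ν (-ν * Real.log (x / 2)) hν
  rw [lemC ν hν] at hB
  rw [hB] at hA
  rw [lemD ν x hx, ← abs_neg]
  refine le_of_eq_of_le ?_ (hA.trans_eq ?_)
  · congr 1; ring
  · field_simp; ring
end

section
/- For all real ν, ν' and every ξ > 0, the function x ↦ K_{iν}(x) · K_{iν'}(x) / x is integrable on the interval [ξ, ∞), and the weighted Lagrange (Green's) identity holds: (ν² − ν'²) · ∫_ξ^∞ K_{iν}(x) K_{iν'}(x) / x dx = − ξ · ( K_{iν}(ξ) · K_{iν'}'(ξ) − K_{iν'}(ξ) · K_{iν}'(ξ) ), where ' denotes differentiation with respect to the argument. -/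
open Real MeasureTheory

lemma kim_le_cosh (t : ℝ) : t ≤ Real.cosh t := by
  have h1 : Real.sinh t < Real.cosh t := Real.sinh_lt_cosh t
  by_cases ht : 0 ≤ t
  · exact (Real.self_le_sinh_iff.2 ht).trans h1.le
  · have := Real.cosh_pos t
    linarith

lemma kim_bound_s5 (n : ℕ) (x : ℝ) (hx : 0 < x) (t : ℝ) :
    Real.cosh t ^ n * Real.exp (-x * Real.cosh t) ≤
      (n.factorial / (x / 2) ^ n) * Real.exp (-(x / 2) * t) := by
  have hc := Real.cosh_pos t
  have h := Real.pow_div_factorial_le_exp (x / 2 * Real.cosh t) (by positivity) n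
  have hf : (0 : ℝ) < n.factorial := by exact_mod_cast n.factorial_pos
  have h1 : Real.cosh t ^ n ≤
      (n.factorial / (x / 2) ^ n) * Real.exp (x / 2 * Real.cosh t) := by
    rw [div_le_iff₀ hf, mul_pow] at h
    rw [div_mul_eq_mul_div, le_div_iff₀ (by positivity)]
    linarith
  calc _ ≤ ((n.factorial / (x / 2) ^ n) * Real.exp (x / 2 * Real.cosh t)) *
        Real.exp (-x * Real.cosh t) := by gcongr
    _ = (n.factorial / (x / 2) ^ n) * Real.exp (-(x / 2) * Real.cosh t) := by
        rw [mul_assoc, ← Real.exp_add]; congr 2; ring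
    _ ≤ _ := by
        have := kim_le_cosh t
        gcongr _ * Real.exp ?_
        nlinarith

lemma kim_int0 (n : ℕ) (x : ℝ) (hx : 0 < x) :
    IntegrableOn (fun t => Real.cosh t ^ n * Real.exp (-x * Real.cosh t)) (Set.Ioi 0) := by
  have h := (exp_neg_integrableOn_Ioi 0 (half_pos hx)).const_mul (n.factorial / (x / 2) ^ n : ℝ)
  refine Integrable.mono' h (Continuous.aestronglyMeasurable (by fun_prop)) ?_
  refine Filter.Eventually.of_forall fun t => ?_
  have hc := Real.cosh_pos t
  rw [Real.norm_of_nonneg (by positivity)]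
  exact kim_bound_s5 n x hx t

/-- moments -/
noncomputable def kimM (n : ℕ) (ν x : ℝ) : ℝ :=
  ∫ t in Set.Ioi (0 : ℝ), Real.cosh t ^ n * Real.exp (-x * Real.cosh t) * Real.cos (ν * t)

lemma kim_norm_le (n : ℕ) (ν x t : ℝ) :
    ‖Real.cosh t ^ n * Real.exp (-x * Real.cosh t) * Real.cos (ν * t)‖ ≤
      Real.cosh t ^ n * Real.exp (-x * Real.cosh t) := by
  have hc := Real.cosh_pos t
  rw [norm_mul, Real.norm_of_nonneg (by positivity)]
  exact mul_le_of_le_one_right (by positivity) (Real.abs_cos_le_one _)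

lemma kim_int (n : ℕ) (ν x : ℝ) (hx : 0 < x) :
    IntegrableOn (fun t => Real.cosh t ^ n * Real.exp (-x * Real.cosh t) * Real.cos (ν * t))
      (Set.Ioi 0) :=
  Integrable.mono' (kim_int0 n x hx) (Continuous.aestronglyMeasurable (by fun_prop))
    (Filter.Eventually.of_forall fun t => kim_norm_le n ν x t)

lemma kim_exp_le {x y t : ℝ} (h : y ≤ x) :
    Real.exp (-x * Real.cosh t) ≤ Real.exp (-(x - y)) * Real.exp (-y * Real.cosh t) := by
  rw [← Real.exp_add]
  have := Real.one_le_cosh t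
  apply Real.exp_le_exp.2
  nlinarith

lemma kimM_deriv (n : ℕ) (ν x : ℝ) (hx : 0 < x) :
    HasDerivAt (kimM n ν) (-kimM (n + 1) ν x) x := by
  have key := hasDerivAt_integral_of_dominated_loc_of_deriv_le (𝕜 := ℝ)
    (μ := volume.restrict (Set.Ioi (0 : ℝ)))
    (F := fun x t => Real.cosh t ^ n * Real.exp (-x * Real.cosh t) * Real.cos (ν * t))
    (F' := fun x t => -(Real.cosh t ^ (n + 1) * Real.exp (-x * Real.cosh t) * Real.cos (ν * t)))
    (x₀ := x) (s := Set.Ioi (x / 2))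
    (bound := fun t => Real.cosh t ^ (n + 1) * Real.exp (-(x / 2) * Real.cosh t))
    (Ioi_mem_nhds (by linarith))
    (Filter.Eventually.of_forall fun y => Continuous.aestronglyMeasurable (by fun_prop))
    (kim_int n ν x hx)
    (Continuous.aestronglyMeasurable (by fun_prop))
    (Filter.Eventually.of_forall fun t y hy => by
      rw [norm_neg]
      refine (kim_norm_le _ _ _ _).trans ?_
      have hc := Real.cosh_pos t
      have hy' : x / 2 < y := hy
      gcongr)
    (kim_int0 (n + 1) (x / 2) (by linarith))
    (Filter.Eventually.of_forall fun t y hy => by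
      have h1 : HasDerivAt (fun y : ℝ => -y * Real.cosh t) (-1 * Real.cosh t) y :=
        ((hasDerivAt_id y).neg).mul_const _
      have h2 := (h1.exp.const_mul (Real.cosh t ^ n)).mul_const (Real.cos (ν * t))
      refine h2.congr_deriv ?_
      ring)
  have h2 := key.2
  rw [integral_neg] at h2
  exact h2

lemma kimM_decay (n : ℕ) (ν ξ : ℝ) (hξ : 0 < ξ) :
    ∃ C : ℝ, ∀ x, ξ ≤ x → |kimM n ν x| ≤ C * Real.exp (-(x - ξ)) := by
  refine ⟨∫ t in Set.Ioi (0 : ℝ), Real.cosh t ^ n * Real.exp (-ξ * Real.cosh t), fun x hx => ?_⟩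
  rw [← integral_mul_const, ← Real.norm_eq_abs, kimM]
  refine norm_integral_le_of_norm_le ((kim_int0 n ξ hξ).mul_const _) ?_
  refine Filter.Eventually.of_forall fun t => (kim_norm_le _ _ _ _).trans ?_
  have hc := Real.cosh_pos t
  have := kim_exp_le (t := t) hx
  calc _ ≤ Real.cosh t ^ n * (Real.exp (-(x - ξ)) * Real.exp (-ξ * Real.cosh t)) := by gcongr
    _ = _ := by ring

lemma kim_tendsto (n : ℕ) (x : ℝ) (hx : 0 < x) :
    Filter.Tendsto (fun t => Real.cosh t ^ n * Real.exp (-x * Real.cosh t)) Filter.atTop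
      (nhds 0) := by
  have h : Filter.Tendsto (fun t : ℝ => (n.factorial / (x / 2) ^ n) * Real.exp (-(x / 2) * t))
      Filter.atTop (nhds 0) := by
    have h1 : Filter.Tendsto (fun t : ℝ => -(x / 2) * t) Filter.atTop Filter.atBot :=
      Filter.tendsto_id.const_mul_atTop_of_neg (by linarith)
    simpa using (Real.tendsto_exp_atBot.comp h1).const_mul (n.factorial / (x / 2) ^ n : ℝ)
  refine squeeze_zero (fun t => ?_) (kim_bound_s5 n x hx) h
  have hc := Real.cosh_pos t
  positivity

lemma kimM_ode (ν x : ℝ) (hx : 0 < x) :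
    x ^ 2 * kimM 2 ν x - x * kimM 1 ν x = (x ^ 2 - ν ^ 2) * kimM 0 ν x := by
  have hi0 := (kim_int 0 ν x hx).const_mul (ν ^ 2 - x ^ 2)
  have hi1 := (kim_int 1 ν x hx).const_mul x
  have hi2 := (kim_int 2 ν x hx).const_mul (x ^ 2)
  have hint := (hi2.sub hi1).add hi0
  have key := integral_Ioi_of_hasDerivAt_of_tendsto' (a := (0 : ℝ)) (m := 0)
    (f := fun t => Real.exp (-x * Real.cosh t) *
      (-x * Real.sinh t * Real.cos (ν * t) + ν * Real.sin (ν * t))) (fun t _ => by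
      have h1 : HasDerivAt (fun t : ℝ => -x * Real.cosh t) (-x * Real.sinh t) t :=
        (Real.hasDerivAt_cosh t).const_mul _
      have h0 : HasDerivAt (fun t : ℝ => ν * t) (ν * 1) t := (hasDerivAt_id t).const_mul _
      have h2 : HasDerivAt (fun t : ℝ => -x * Real.sinh t) (-x * Real.cosh t) t :=
        (Real.hasDerivAt_sinh t).const_mul _
      have h3 := h1.exp.mul ((h2.mul h0.cos).add (h0.sin.const_mul ν))
      refine h3.congr_deriv ?_
      show _ = x ^ 2 * (Real.cosh t ^ 2 * Real.exp (-x * Real.cosh t) * Real.cos (ν * t)) -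
        x * (Real.cosh t ^ 1 * Real.exp (-x * Real.cosh t) * Real.cos (ν * t)) +
        (ν ^ 2 - x ^ 2) * (Real.cosh t ^ 0 * Real.exp (-x * Real.cosh t) * Real.cos (ν * t))
      have hs := Real.cosh_sq t
      simp only [Pi.add_apply, Pi.mul_apply]
      rw [hs]
      ring) hint ?_
  · have e0 := integral_add (hi2.sub hi1) hi0
    have e1 := integral_sub hi2 hi1
    simp only [Pi.add_apply, Pi.sub_apply] at key e0 e1
    rw [e0, e1, integral_const_mul, integral_const_mul, integral_const_mul] at key
    change x ^ 2 * kimM 2 ν x - x * kimM 1 ν x + (ν ^ 2 - x ^ 2) * kimM 0 ν x = _ at key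
    simp at key
    linarith
  · have h := ((kim_tendsto 1 x hx).const_mul x).add ((kim_tendsto 0 x hx).const_mul |ν|)
    simp only [mul_zero, add_zero] at h
    refine squeeze_zero_norm (fun t => ?_) h
    have hE := Real.exp_pos (-x * Real.cosh t)
    have hs : |Real.sinh t| ≤ Real.cosh t := by
      rw [abs_le]
      constructor
      · have := Real.sinh_lt_cosh (-t)
        simp at this
        linarith
      · exact (Real.sinh_lt_cosh t).le
    have hc := Real.cosh_pos t
    rw [norm_mul, Real.norm_of_nonneg hE.le, Real.norm_eq_abs]
    have h1 : |-x * Real.sinh t * Real.cos (ν * t)| ≤ x * Real.cosh t := by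
      rw [abs_mul, abs_mul, abs_neg, abs_of_pos hx]
      calc _ ≤ x * Real.cosh t * 1 := by
            gcongr
            exact Real.abs_cos_le_one _
        _ = _ := mul_one _
    have h2 : |ν * Real.sin (ν * t)| ≤ |ν| := by
      rw [abs_mul]
      exact mul_le_of_le_one_right (abs_nonneg _) (Real.abs_sin_le_one _)
    calc _ ≤ Real.exp (-x * Real.cosh t) * (x * Real.cosh t + |ν|) := by
          gcongr
          exact (abs_add_le _ _).trans (add_le_add h1 h2)
      _ = _ := by ring

lemma kim_eq (ν : ℝ) : Kim ν = kimM 0 ν := by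
  funext x
  simp [Kim, kimM]

theorem macdonald_green_identity (ν ν' ξ : ℝ) (hξ : 0 < ξ) :
    IntegrableOn (fun x => Kim ν x * Kim ν' x / x) (Set.Ici ξ) ∧
    (ν ^ 2 - ν' ^ 2) * ∫ x in Set.Ici ξ, Kim ν x * Kim ν' x / x =
      -ξ * (Kim ν ξ * deriv (Kim ν') ξ - Kim ν' ξ * deriv (Kim ν) ξ) := by
  rw [kim_eq, kim_eq, (kimM_deriv 0 ν ξ hξ).deriv, (kimM_deriv 0 ν' ξ hξ).deriv,
    integrableOn_Ici_iff_integrableOn_Ioi, integral_Ici_eq_integral_Ioi]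
  obtain ⟨A0, hA0⟩ := kimM_decay 0 ν ξ hξ
  obtain ⟨A1, hA1⟩ := kimM_decay 1 ν ξ hξ
  obtain ⟨B0, hB0⟩ := kimM_decay 0 ν' ξ hξ
  obtain ⟨B1, hB1⟩ := kimM_decay 1 ν' ξ hξ
  have nn : ∀ {m : ℕ} {μ C : ℝ}, (∀ x, ξ ≤ x → |kimM m μ x| ≤ C * Real.exp (-(x - ξ))) → 0 ≤ C := by
    intro m μ C h
    have := (abs_nonneg _).trans (h ξ le_rfl)
    simpa using this
  have hint : IntegrableOn (fun x => kimM 0 ν x * kimM 0 ν' x / x) (Set.Ioi ξ) := by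
    have hb : IntegrableOn (fun x : ℝ => (A0 * B0 * Real.exp ξ / ξ) * Real.exp (-x)) (Set.Ioi ξ) :=
      (integrableOn_exp_neg_Ioi ξ).const_mul _
    refine Integrable.mono' hb ?_ ?_
    · refine ContinuousOn.aestronglyMeasurable (fun x hx => ?_) measurableSet_Ioi
      have hx0 : 0 < x := hξ.trans hx
      exact (((kimM_deriv 0 ν x hx0).continuousAt.mul
        (kimM_deriv 0 ν' x hx0).continuousAt).div continuousAt_id hx0.ne').continuousWithinAt
    · refine (ae_restrict_iff' measurableSet_Ioi).2 (Filter.Eventually.of_forall fun x hx => ?_)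
      have hx' : ξ ≤ x := le_of_lt hx
      have hx0 : 0 < x := hξ.trans hx
      rw [norm_div, norm_mul, Real.norm_of_nonneg hx0.le, Real.norm_eq_abs, Real.norm_eq_abs]
      have h1 : |kimM 0 ν' x| ≤ B0 := (hB0 x hx').trans
        (mul_le_of_le_one_right (nn hB0) (Real.exp_le_one_iff.2 (by linarith)))
      have hA := nn hA0
      have hB := nn hB0
      calc _ ≤ (A0 * Real.exp (-(x - ξ))) * B0 / ξ := by
            gcongr
            exact hA0 x hx'
        _ = _ := by
            rw [show -(x - ξ) = ξ + -x by ring, Real.exp_add]; ring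
  refine ⟨hint, ?_⟩
  have key := integral_Ioi_of_hasDerivAt_of_tendsto' (a := ξ) (m := 0)
    (f := fun x => x * (kimM 0 ν x * -kimM 1 ν' x - kimM 0 ν' x * -kimM 1 ν x))
    (fun x hx => by
      have hx0 : 0 < x := lt_of_lt_of_le hξ hx
      have h := (hasDerivAt_id x).mul
        (((kimM_deriv 0 ν x hx0).mul (kimM_deriv 1 ν' x hx0).neg).sub
        ((kimM_deriv 0 ν' x hx0).mul (kimM_deriv 1 ν x hx0).neg))
      refine h.congr_deriv ?_
      show _ = (ν ^ 2 - ν' ^ 2) * (kimM 0 ν x * kimM 0 ν' x / x)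
      have o1 := kimM_ode ν x hx0
      have o2 := kimM_ode ν' x hx0
      simp
      field_simp
      linear_combination kimM 0 ν x * o2 - kimM 0 ν' x * o1)
    (hint.const_mul _) ?_
  · rw [integral_const_mul] at key
    rw [key]
    simp
  · have h : Filter.Tendsto (fun x : ℝ => ((A0 * B1 + B0 * A1) * Real.exp ξ) *
        (x ^ 1 * Real.exp (-x))) Filter.atTop (nhds 0) := by
      simpa using (Real.tendsto_pow_mul_exp_neg_atTop_nhds_zero 1).const_mul
        ((A0 * B1 + B0 * A1) * Real.exp ξ)
    refine squeeze_zero_norm' ?_ h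
    filter_upwards [Filter.eventually_ge_atTop ξ] with x hx
    have hx0 : 0 < x := lt_of_lt_of_le hξ hx
    have hA := nn hA0
    have hB := nn hB0
    have hA' := nn hA1
    have hB' := nn hB1
    have hE : Real.exp (-(x - ξ)) ≤ 1 := Real.exp_le_one_iff.2 (by linarith)
    have b1 : |kimM 1 ν' x| ≤ B1 := (hB1 x hx).trans (mul_le_of_le_one_right hB' hE)
    have b2 : |kimM 1 ν x| ≤ A1 := (hA1 x hx).trans (mul_le_of_le_one_right hA' hE)
    rw [norm_mul, Real.norm_of_nonneg hx0.le, Real.norm_eq_abs]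
    calc _ ≤ x * (A0 * Real.exp (-(x - ξ)) * B1 + B0 * Real.exp (-(x - ξ)) * A1) := by
          gcongr
          refine (abs_sub _ _).trans ?_
          rw [abs_mul, abs_mul, abs_neg, abs_neg]
          gcongr
          · exact hA0 x hx
          · exact hB0 x hx
      _ = _ := by
          rw [show -(x - ξ) = ξ + -x by ring, Real.exp_add]; ring
end

section
/- For all real ν, ν', the weighted Wronskian-type boundary term at infinity vanishes: x · ( K_{iν}(x) · K_{iν'}'(x) − K_{iν'}(x) · K_{iν}'(x) ) → 0 as x → +∞, where ' denotes differentiation with respect to the argument. -/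
open Real Filter

theorem kim_ptw {x t : ℝ} (hx : 2 ≤ x) (ht : 0 < t) :
    Real.cosh t * Real.exp (-x * Real.cosh t) ≤ Real.exp (2 - x) * Real.exp (-t) := by
  have h1 : Real.cosh t ≤ Real.exp (Real.cosh t) := by
    have := Real.add_one_le_exp (Real.cosh t); linarith
  have h2 : 1 ≤ Real.cosh t := Real.one_le_cosh t
  have h3 : t ≤ Real.cosh t :=
    (Real.self_le_sinh_iff.2 ht.le).trans (Real.sinh_lt_cosh t).le
  calc Real.cosh t * Real.exp (-x * Real.cosh t)
      ≤ Real.exp (Real.cosh t) * Real.exp (-x * Real.cosh t) := by gcongr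
    _ = Real.exp (Real.cosh t + -x * Real.cosh t) := by rw [Real.exp_add]
    _ ≤ Real.exp ((2 - x) + -t) := by
        apply Real.exp_le_exp.2; nlinarith
    _ = _ := by rw [Real.exp_add]

theorem kim_ptw1 {x t : ℝ} (ν : ℝ) (hx : 2 ≤ x) (ht : 0 < t) :
    ‖Real.exp (-x * Real.cosh t) * Real.cos (ν * t)‖ ≤ Real.exp (2 - x) * Real.exp (-t) := by
  refine le_trans ?_ (kim_ptw hx ht)
  rw [norm_mul, Real.norm_eq_abs, Real.norm_eq_abs, Real.abs_exp]
  have h2 : 1 ≤ Real.cosh t := Real.one_le_cosh t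
  have h3 := Real.abs_cos_le_one (ν * t)
  have h4 := Real.exp_pos (-x * Real.cosh t)
  nlinarith

theorem kim_ptw2 {x t : ℝ} (ν : ℝ) (hx : 2 ≤ x) (ht : 0 < t) :
    ‖Real.exp (-x * Real.cosh t) * (-Real.cosh t) * Real.cos (ν * t)‖
      ≤ Real.exp (2 - x) * Real.exp (-t) := by
  refine le_trans ?_ (kim_ptw hx ht)
  rw [norm_mul, norm_mul, norm_neg, Real.norm_eq_abs, Real.norm_eq_abs, Real.norm_eq_abs,
    Real.abs_exp, abs_of_pos (Real.cosh_pos t), mul_comm (Real.cosh t)]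
  have h2 : 0 < Real.cosh t := Real.cosh_pos t
  have h3 := Real.abs_cos_le_one (ν * t)
  have h4 := Real.exp_pos (-x * Real.cosh t)
  exact mul_le_of_le_one_right (by positivity) h3

theorem kim_int_s6 (c : ℝ) : MeasureTheory.IntegrableOn
    (fun t : ℝ => c * Real.exp (-t)) (Set.Ioi 0) :=
  (integrableOn_exp_neg_Ioi 0).const_mul c

theorem kim_int_val (c : ℝ) : ∫ t in Set.Ioi (0:ℝ), c * Real.exp (-t) = c := by
  rw [MeasureTheory.integral_const_mul, integral_exp_neg_Ioi_zero, mul_one]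

theorem kim_bd (ν : ℝ) {x : ℝ} (hx : 2 ≤ x) : |Kim ν x| ≤ Real.exp (2 - x) := by
  have := MeasureTheory.norm_integral_le_of_norm_le (kim_int_s6 (Real.exp (2 - x)))
    (f := fun t => Real.exp (-x * Real.cosh t) * Real.cos (ν * t))
    ((MeasureTheory.ae_restrict_iff' measurableSet_Ioi).2 (.of_forall
      fun t ht => kim_ptw1 ν hx ht))
  rwa [kim_int_val] at this

theorem kim_deriv_bd (ν : ℝ) {x : ℝ} (hx : 2 < x) : |deriv (Kim ν) x| ≤ Real.exp (2 - x) := by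
  have key := hasDerivAt_integral_of_dominated_loc_of_deriv_le (𝕜 := ℝ)
    (μ := MeasureTheory.volume.restrict (Set.Ioi (0:ℝ)))
    (F := fun x t => Real.exp (-x * Real.cosh t) * Real.cos (ν * t))
    (F' := fun x t => Real.exp (-x * Real.cosh t) * (-Real.cosh t) * Real.cos (ν * t))
    (bound := fun t => 1 * Real.exp (-t)) (x₀ := x) (s := Set.Ioi 2)
    (Ioi_mem_nhds hx)
    (.of_forall fun y => by
      apply Continuous.aestronglyMeasurable
      fun_prop)
    (by
      refine (kim_int_s6 (Real.exp (2 - x))).mono' ?_ ?_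
      · apply Continuous.aestronglyMeasurable
        fun_prop
      · exact (MeasureTheory.ae_restrict_iff' measurableSet_Ioi).2 (.of_forall
          fun t ht => kim_ptw1 ν hx.le ht))
    (by
      apply Continuous.aestronglyMeasurable
      fun_prop)
    ((MeasureTheory.ae_restrict_iff' measurableSet_Ioi).2 (.of_forall
      fun t ht y hy => (kim_ptw2 ν (le_of_lt hy) ht).trans (by
        have : Real.exp (2 - y) ≤ 1 := Real.exp_le_one_iff.2 (by
          have : 2 < y := hy
          linarith)
        gcongr)))
    (kim_int_s6 1)
    (.of_forall fun t y _ => by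
      have h : HasDerivAt (fun y : ℝ => -y * Real.cosh t) (-Real.cosh t) y := by
        simpa using (hasDerivAt_id y).neg.mul_const (Real.cosh t)
      exact h.exp.mul_const _)
  have hd : deriv (Kim ν) x = _ := key.2.deriv
  rw [hd]
  have := MeasureTheory.norm_integral_le_of_norm_le (kim_int_s6 (Real.exp (2 - x)))
    (f := fun t => Real.exp (-x * Real.cosh t) * (-Real.cosh t) * Real.cos (ν * t))
    ((MeasureTheory.ae_restrict_iff' measurableSet_Ioi).2 (.of_forall
      fun t ht => kim_ptw2 ν hx.le ht))
  rwa [kim_int_val] at this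

theorem macdonald_wronskian_vanishes_at_top (ν ν' : ℝ) :
    Tendsto (fun x => x * (Kim ν x * deriv (Kim ν') x - Kim ν' x * deriv (Kim ν) x))
      atTop (nhds 0) := by
  have h0 : Tendsto (fun x : ℝ => 2 * Real.exp 2 * (x ^ 1 * Real.exp (-x))) atTop (nhds 0) := by
    simpa using (Real.tendsto_pow_mul_exp_neg_atTop_nhds_zero 1).const_mul (2 * Real.exp 2)
  refine squeeze_zero_norm' ?_ h0
  filter_upwards [eventually_gt_atTop 2] with x hx
  have e1 : Real.exp (2 - x) ≤ 1 := Real.exp_le_one_iff.2 (by linarith)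
  have e0 := Real.exp_pos (2 - x)
  have p : ∀ a b : ℝ, |Kim a x * deriv (Kim b) x| ≤ Real.exp (2 - x) := fun a b => by
    rw [abs_mul]
    calc _ ≤ Real.exp (2 - x) * 1 := by
          gcongr
          · exact kim_bd a hx.le
          · exact (kim_deriv_bd b hx).trans e1
      _ = _ := mul_one _
  have hs := abs_sub (Kim ν x * deriv (Kim ν') x) (Kim ν' x * deriv (Kim ν) x)
  have h1 := p ν ν'
  have h2 := p ν' ν
  rw [Real.norm_eq_abs, abs_mul, abs_of_pos (by linarith : 0 < x)]
  have h3 : Real.exp (2 - x) = Real.exp 2 * Real.exp (-x) := by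
    rw [← Real.exp_add, sub_eq_add_neg]
  calc _ ≤ x * (2 * Real.exp (2 - x)) := by
        apply mul_le_mul_of_nonneg_left _ (by linarith)
        linarith
    _ = _ := by rw [h3]; ring
end

section
/- For all real ν, ν' with ν > 0, ν' > 0 and ν ≠ ν', as ξ → 0+ one has ∫_ξ^∞ K_{iν}(x) K_{iν'}(x)/x dx = (π / (2 √(ν ν' sinh(πν) sinh(πν')))) · [ sin( −(ν−ν') log(ξ/2) + arg Γ(iν) − arg Γ(iν') ) / (ν−ν') + sin( −(ν+ν') log(ξ/2) + arg Γ(iν) + arg Γ(iν') ) / (ν+ν') ] + o(1); that is, the difference between the left-hand side and the bracketed expression tends to 0 as ξ → 0+. -/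
open Real Filter MeasureTheory

lemma km_int_one : IntegrableOn (fun t : ℝ => 2 * Real.exp (-t)) (Set.Ioi 0) := by
  have := exp_neg_integrableOn_Ioi 0 (b := 1) one_pos
  have h2 := this.const_mul 2
  simp only [neg_mul, one_mul] at h2
  exact h2

lemma km_cosh_ge (t : ℝ) : Real.exp t ≤ 2 * Real.cosh t := by
  rw [Real.cosh_eq]; have := Real.exp_pos (-t); linarith

lemma km_bound (x : ℝ) (hx : 0 < x) (n : ℕ) (t : ℝ) :
    Real.exp (-x * Real.cosh t) * Real.cosh t ^ n
      ≤ ((n+1).factorial / x ^ (n+1)) * (2 * Real.exp (-t)) := by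
  have hc : 0 < Real.cosh t := Real.cosh_pos t
  have h1 := Real.pow_div_factorial_le_exp (x * Real.cosh t) (by positivity) (n+1)
  have h2 := km_cosh_ge t
  have hf : (0:ℝ) < (n+1).factorial := by positivity
  have h3 : (Real.cosh t)⁻¹ ≤ 2 * Real.exp (-t) := by
    rw [Real.exp_neg, inv_le_iff_one_le_mul₀ hc]
    have := Real.exp_pos t
    rw [show 2 * (Real.exp t)⁻¹ * Real.cosh t = (2 * Real.cosh t) / Real.exp t by ring]
    rwa [one_le_div this]
  calc Real.exp (-x * Real.cosh t) * Real.cosh t ^ n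
      = Real.cosh t ^ n / Real.exp (x * Real.cosh t) := by
        rw [neg_mul, Real.exp_neg]; ring
    _ ≤ Real.cosh t ^ n / ((x * Real.cosh t)^(n+1) / (n+1).factorial) := by gcongr
    _ = ((n+1).factorial / x ^ (n+1)) * (Real.cosh t)⁻¹ := by
        rw [mul_pow, pow_succ (Real.cosh t)]; field_simp
    _ ≤ _ := by gcongr

lemma km_int_pow (x : ℝ) (hx : 0 < x) (n : ℕ) :
    IntegrableOn (fun t : ℝ => Real.exp (-x * Real.cosh t) * Real.cosh t ^ n) (Set.Ioi 0) := by
  refine Integrable.mono' (km_int_one.const_mul ((n+1).factorial / x ^ (n+1))) ?_ ?_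
  · exact Continuous.aestronglyMeasurable (by fun_prop)
  · refine Eventually.of_forall fun t => ?_
    have : 0 < Real.cosh t := Real.cosh_pos t
    rw [Real.norm_of_nonneg (by positivity)]
    exact km_bound x hx n t

lemma km_int (x : ℝ) (hx : 0 < x) (n : ℕ) (g : ℝ → ℝ) (hg : Continuous g)
    (hb : ∀ t, |g t| ≤ Real.cosh t ^ n) :
    IntegrableOn (fun t : ℝ => Real.exp (-x * Real.cosh t) * g t) (Set.Ioi 0) := by
  refine Integrable.mono' (km_int_pow x hx n) ?_ ?_
  · exact Continuous.aestronglyMeasurable (by fun_prop)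
  · refine Eventually.of_forall fun t => ?_
    rw [norm_mul, Real.norm_of_nonneg (Real.exp_pos _).le, Real.norm_eq_abs]
    gcongr
    exact hb t

noncomputable def kmF (g : ℝ → ℝ) (x : ℝ) : ℝ :=
  ∫ t in Set.Ioi (0 : ℝ), Real.exp (-x * Real.cosh t) * g t

lemma km_deriv (x : ℝ) (hx : 0 < x) (n : ℕ) (g : ℝ → ℝ) (hg : Continuous g)
    (hb : ∀ t, |g t| ≤ Real.cosh t ^ n) :
    HasDerivAt (kmF g) (- kmF (fun t => Real.cosh t * g t) x) x := by
  have hs : Set.Ioi (x/2) ∈ nhds x := Ioi_mem_nhds (by linarith)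
  have := (hasDerivAt_integral_of_dominated_loc_of_deriv_le
    (μ := volume.restrict (Set.Ioi (0:ℝ))) (𝕜 := ℝ)
    (F := fun x t => Real.exp (-x * Real.cosh t) * g t)
    (F' := fun x t => - (Real.exp (-x * Real.cosh t) * (Real.cosh t * g t)))
    (bound := fun t => Real.exp (-(x/2) * Real.cosh t) * Real.cosh t ^ (n+1)) (x₀ := x)
    hs ?_ (km_int x hx n g hg hb) ?_ ?_ (km_int_pow (x/2) (by linarith) (n+1)) ?_).2
  · rw [integral_neg] at this
    exact this
  · exact Eventually.of_forall fun y => Continuous.aestronglyMeasurable (by fun_prop)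
  · exact Continuous.aestronglyMeasurable (by fun_prop)
  · refine Eventually.of_forall fun t y hy => ?_
    have hc : 0 < Real.cosh t := Real.cosh_pos t
    have hy' : x/2 < y := hy
    rw [norm_neg, norm_mul, norm_mul, Real.norm_of_nonneg (Real.exp_pos _).le,
      Real.norm_of_nonneg hc.le, Real.norm_eq_abs, pow_succ']
    gcongr
    exact hb t
  · refine Eventually.of_forall fun t y hy => ?_
    have h1 : HasDerivAt (fun y : ℝ => -y * Real.cosh t) (-1 * Real.cosh t) y :=
      (hasDerivAt_id y).neg.mul_const _
    exact (h1.exp.mul_const (g t)).congr_deriv (by ring)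

lemma km_decay (n : ℕ) (g : ℝ → ℝ)
    (hb : ∀ t, |g t| ≤ Real.cosh t ^ n) :
    ∃ C, 0 ≤ C ∧ ∀ x, 1 ≤ x → |kmF g x| ≤ C * Real.exp (-x) := by
  refine ⟨Real.exp 1 * ∫ t in Set.Ioi (0:ℝ), Real.exp (-1 * Real.cosh t) * Real.cosh t ^ n, ?_, ?_⟩
  · have : 0 ≤ ∫ t in Set.Ioi (0:ℝ), Real.exp (-1 * Real.cosh t) * Real.cosh t ^ n :=
      integral_nonneg fun t => by have := Real.cosh_pos t; positivity
    positivity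
  · intro x hx
    have : |kmF g x| ≤ ∫ t in Set.Ioi (0:ℝ),
        Real.exp (-(x-1)) * (Real.exp (-1 * Real.cosh t) * Real.cosh t ^ n) := by
      rw [← Real.norm_eq_abs]
      refine norm_integral_le_of_norm_le ((km_int_pow 1 one_pos n).const_mul _) ?_
      refine Eventually.of_forall fun t => ?_
      rw [norm_mul, Real.norm_of_nonneg (Real.exp_pos _).le, Real.norm_eq_abs, ← mul_assoc,
        ← Real.exp_add]
      have hc : 1 ≤ Real.cosh t := Real.one_le_cosh t
      gcongr
      · nlinarith
      · exact hb t
    rw [integral_const_mul] at this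
    rw [show -(x-1) = 1 + -x by ring, Real.exp_add] at this
    linarith

lemma km_b0 (ν t : ℝ) : |Real.cos (ν * t)| ≤ Real.cosh t ^ 0 := by
  simpa using Real.abs_cos_le_one _

lemma km_b1 (ν t : ℝ) : |Real.cosh t * Real.cos (ν * t)| ≤ Real.cosh t ^ 1 := by
  have hc : 0 < Real.cosh t := Real.cosh_pos t
  rw [abs_mul, abs_of_pos hc, pow_one]
  exact mul_le_of_le_one_right hc.le (Real.abs_cos_le_one _)

lemma km_b2 (ν t : ℝ) : |Real.cosh t * (Real.cosh t * Real.cos (ν * t))| ≤ Real.cosh t ^ 2 := by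
  have hc : 0 < Real.cosh t := Real.cosh_pos t
  rw [abs_mul, abs_of_pos hc, pow_succ']
  gcongr
  exact km_b1 ν t

lemma km_abs_sinh_le (t : ℝ) : |Real.sinh t| ≤ Real.cosh t := by
  have h := Real.cosh_pos t
  apply abs_le_of_sq_le_sq _ h.le
  have := Real.cosh_sq t
  linarith

lemma km_tend0 (x : ℝ) (hx : 0 < x) (g : ℝ → ℝ) (hb : ∀ t, |g t| ≤ Real.cosh t ^ 1) :
    Tendsto (fun t => Real.exp (-x * Real.cosh t) * g t) atTop (nhds 0) := by
  have h : Tendsto (fun t : ℝ => ((1+1).factorial / x ^ (1+1)) * (2 * Real.exp (-t)))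
      atTop (nhds 0) := by
    have := (Real.tendsto_exp_neg_atTop_nhds_zero.const_mul 2).const_mul ((1+1).factorial / x ^ (1+1))
    simpa using this
  refine squeeze_zero_norm (fun t => ?_) h
  refine le_trans ?_ (km_bound x hx 1 t)
  rw [norm_mul, Real.norm_of_nonneg (Real.exp_pos _).le, Real.norm_eq_abs]
  gcongr
  exact hb t

lemma km_ode (ν x : ℝ) (hx : 0 < x) :
    x^2 * kmF (fun t => Real.cosh t * (Real.cosh t * Real.cos (ν * t))) x
      - x * kmF (fun t => Real.cosh t * Real.cos (ν * t)) x
      - (x^2 - ν^2) * kmF (fun t => Real.cos (ν * t)) x = 0 := by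
  have i0 := km_int x hx 0 _ (by fun_prop) (km_b0 ν)
  have i1 := km_int x hx 1 _ (by fun_prop) (km_b1 ν)
  have i2 := km_int x hx 2 _ (by fun_prop) (km_b2 ν)
  unfold kmF
  rw [← integral_const_mul, ← integral_const_mul, ← integral_const_mul,
    ← integral_sub (i2.const_mul _) (i1.const_mul _)]
  refine (integral_sub ((i2.const_mul _).sub (i1.const_mul _)) (i0.const_mul _)).symm.trans ?_
  simp only [Pi.sub_apply]
  have key := MeasureTheory.integral_Ioi_of_hasDerivAt_of_tendsto (a := (0:ℝ)) (m := (0:ℝ))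
    (f := fun t => (-x) * (Real.exp (-x * Real.cosh t) * (Real.sinh t * Real.cos (ν * t)))
       + ν * (Real.exp (-x * Real.cosh t) * Real.sin (ν * t)))
    (f' := fun t => x^2 * (Real.exp (-x * Real.cosh t) * (Real.cosh t * (Real.cosh t * Real.cos (ν * t))))
      - x * (Real.exp (-x * Real.cosh t) * (Real.cosh t * Real.cos (ν * t)))
      - (x^2 - ν^2) * (Real.exp (-x * Real.cosh t) * Real.cos (ν * t))) ?_ ?_ ?_ ?_
  · rw [key]; simp
  · exact Continuous.continuousWithinAt (by fun_prop)
  · intro t _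
    have hE : HasDerivAt (fun t : ℝ => Real.exp (-x * Real.cosh t))
        (Real.exp (-x * Real.cosh t) * (-x * Real.sinh t)) t :=
      ((Real.hasDerivAt_cosh t).const_mul (-x)).exp
    have hl : HasDerivAt (fun t : ℝ => ν * t) ν t := by
      simpa using (hasDerivAt_id t).const_mul ν
    have h := ((hE.mul ((Real.hasDerivAt_sinh t).mul hl.cos)).const_mul (-x)).add
      ((hE.mul hl.sin).const_mul ν)
    refine HasDerivAt.congr_deriv h ?_
    simp only [Pi.mul_apply]
    have := Real.cosh_sq t
    linear_combination (-x^2 * Real.exp (-x * Real.cosh t) * Real.cos (ν * t)) * this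
  · exact ((i2.const_mul _).sub (i1.const_mul _)).sub (i0.const_mul _)
  · have a1 := (km_tend0 x hx (fun t => Real.sinh t * Real.cos (ν * t)) (fun t => by
      rw [abs_mul, pow_one]
      have := km_abs_sinh_le t
      have h2 := Real.abs_cos_le_one (ν * t)
      calc _ ≤ |Real.sinh t| * 1 := by gcongr
        _ ≤ _ := by linarith)).const_mul (-x)
    have a2 := (km_tend0 x hx (fun t => Real.sin (ν * t)) (fun t => by
      rw [pow_one]
      exact (Real.abs_sin_le_one _).trans (Real.one_le_cosh t))).const_mul ν
    simpa using a1.add a2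

noncomputable def kmS (ν x : ℝ) : ℂ :=
  ∫ t in Set.Ioi (0 : ℝ), ((Real.exp (-x * Real.cosh t) * (x * Real.sinh t) : ℝ) : ℂ) *
    Complex.exp ((ν * t : ℝ) * Complex.I)

lemma km_int_S (ν x : ℝ) (hx : 0 < x) : IntegrableOn (fun t : ℝ =>
    ((Real.exp (-x * Real.cosh t) * (x * Real.sinh t) : ℝ) : ℂ) *
    Complex.exp ((ν * t : ℝ) * Complex.I)) (Set.Ioi 0) := by
  refine Integrable.mono' ((km_int_pow x hx 1).const_mul x) ?_ ?_
  · exact Continuous.aestronglyMeasurable (by fun_prop)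
  · refine Eventually.of_forall fun t => ?_
    rw [norm_mul, Complex.norm_exp_ofReal_mul_I, Complex.norm_real, mul_one, norm_mul, norm_mul,
      Real.norm_of_nonneg (Real.exp_pos _).le, Real.norm_of_nonneg hx.le, Real.norm_eq_abs, pow_one]
    have := mul_le_mul_of_nonneg_left (km_abs_sinh_le t)
      (mul_nonneg hx.le (Real.exp_pos (-x * Real.cosh t)).le)
    linarith

lemma km_S_re_eq (ν x : ℝ) (hx : 0 < x) : (kmS ν x).re =
    ∫ t in Set.Ioi (0 : ℝ), Real.exp (-x * Real.cosh t) * (x * Real.sinh t * Real.cos (ν * t)) := by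
  have h := ContinuousLinearMap.integral_comp_comm Complex.reCLM (km_int_S ν x hx)
  rw [Complex.reCLM_apply] at h
  rw [kmS, ← h]
  refine integral_congr_ae (Eventually.of_forall fun t => ?_)
  simp only [Complex.reCLM_apply]
  rw [Complex.re_ofReal_mul, Complex.exp_ofReal_mul_I_re]
  ring

lemma km_S_im_eq (ν x : ℝ) (hx : 0 < x) : (kmS ν x).im =
    ∫ t in Set.Ioi (0 : ℝ), Real.exp (-x * Real.cosh t) * (x * Real.sinh t * Real.sin (ν * t)) := by
  have h := ContinuousLinearMap.integral_comp_comm Complex.imCLM (km_int_S ν x hx)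
  rw [Complex.imCLM_apply] at h
  rw [kmS, ← h]
  refine integral_congr_ae (Eventually.of_forall fun t => ?_)
  simp only [Complex.imCLM_apply]
  rw [Complex.im_ofReal_mul, Complex.exp_ofReal_mul_I_im]
  ring

lemma km_int_sinh (x : ℝ) (hx : 0 < x) (g : ℝ → ℝ) (hg : Continuous g) (hb : ∀ t, |g t| ≤ 1) :
    IntegrableOn (fun t => Real.exp (-x * Real.cosh t) * (x * Real.sinh t * g t))
      (Set.Ioi 0) := by
  have := (km_int x hx 1 (fun t => Real.sinh t * g t) (by fun_prop) (fun t => by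
      rw [abs_mul, pow_one]
      have := km_abs_sinh_le t
      have h2 := hb t
      calc _ ≤ |Real.sinh t| * 1 := by gcongr
        _ ≤ _ := by linarith)).const_mul x
  refine this.congr (Eventually.of_forall fun t => ?_)
  simp only []
  ring

lemma km_S_im (ν x : ℝ) (hx : 0 < x) :
    ν * kmF (fun t => Real.cos (ν * t)) x = (kmS ν x).im := by
  have i0 := (km_int x hx 0 _ (by fun_prop) (km_b0 ν)).const_mul ν
  have i1 := km_int_sinh x hx (fun t => Real.sin (ν * t)) (by fun_prop)
    (fun t => Real.abs_sin_le_one _)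
  have key := MeasureTheory.integral_Ioi_of_hasDerivAt_of_tendsto (a := (0:ℝ)) (m := (0:ℝ))
    (f := fun t => Real.exp (-x * Real.cosh t) * Real.sin (ν * t))
    (f' := fun t => ν * (Real.exp (-x * Real.cosh t) * Real.cos (ν * t)) -
      Real.exp (-x * Real.cosh t) * (x * Real.sinh t * Real.sin (ν * t))) ?_ ?_ ?_ ?_
  · rw [integral_sub i0 i1, integral_const_mul, ← km_S_im_eq ν x hx] at key
    unfold kmF
    simp only [mul_zero, Real.sin_zero, sub_self] at key
    linarith
  · exact Continuous.continuousWithinAt (by fun_prop)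
  · intro t _
    have hE : HasDerivAt (fun t : ℝ => Real.exp (-x * Real.cosh t))
        (Real.exp (-x * Real.cosh t) * (-x * Real.sinh t)) t :=
      ((Real.hasDerivAt_cosh t).const_mul (-x)).exp
    have hl : HasDerivAt (fun t : ℝ => ν * t) ν t := by
      simpa using (hasDerivAt_id t).const_mul ν
    exact (hE.mul hl.sin).congr_deriv (by ring)
  · exact i0.sub i1
  · exact km_tend0 x hx (fun t => Real.sin (ν * t)) (fun t => by
      rw [pow_one]
      exact (Real.abs_sin_le_one _).trans (Real.one_le_cosh t))

lemma km_S_re (ν x : ℝ) (hx : 0 < x) :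
    |x * kmF (fun t => Real.cosh t * Real.cos (ν * t)) x - (kmS ν x).re| ≤ x * 2 := by
  have i0 := (km_int x hx 1 _ (by fun_prop) (km_b1 ν)).const_mul x
  have i1 := km_int_sinh x hx (fun t => Real.cos (ν * t)) (by fun_prop)
    (fun t => Real.abs_cos_le_one _)
  rw [km_S_re_eq ν x hx, kmF, ← integral_const_mul, ← integral_sub i0 i1, ← Real.norm_eq_abs]
  have h : ∫ t in Set.Ioi (0:ℝ), x * (2 * Real.exp (-t)) = x * 2 := by
    rw [integral_const_mul, integral_const_mul, integral_exp_neg_Ioi_zero]; ring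
  rw [← h]
  refine norm_integral_le_of_norm_le (km_int_one.const_mul x) (Eventually.of_forall fun t => ?_)
  have e : x * (Real.exp (-x * Real.cosh t) * (Real.cosh t * Real.cos (ν * t))) -
      Real.exp (-x * Real.cosh t) * (x * Real.sinh t * Real.cos (ν * t)) =
      x * (Real.exp (-x * Real.cosh t) * Real.exp (-t) * Real.cos (ν * t)) := by
    rw [← Real.cosh_sub_sinh]; ring
  rw [e, norm_mul, norm_mul, norm_mul, Real.norm_of_nonneg hx.le,
    Real.norm_of_nonneg (Real.exp_pos _).le, Real.norm_of_nonneg (Real.exp_pos _).le,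
    Real.norm_eq_abs]
  have h1 : Real.exp (-x * Real.cosh t) ≤ 1 := by
    rw [Real.exp_le_one_iff]
    have := Real.cosh_pos t
    nlinarith
  have h2 := Real.abs_cos_le_one (ν * t)
  have h3 := Real.exp_pos (-t)
  calc _ ≤ x * (1 * Real.exp (-t) * 1) := by gcongr
    _ ≤ _ := by nlinarith

noncomputable def kmG (ν x u : ℝ) : ℂ :=
  (((1 - x^2 / (4 * u^2)) * Real.exp (-u - x^2/(4*u)) : ℝ) : ℂ) *
    Complex.exp ((ν * Real.log u : ℝ) * Complex.I)

lemma km_image (c : ℝ) (hc : 0 < c) :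
    (fun t => c * Real.exp t) '' Set.Ioi 0 = Set.Ioi c := by
  ext u
  simp only [Set.mem_image, Set.mem_Ioi]
  constructor
  · rintro ⟨t, ht, rfl⟩
    have := Real.one_lt_exp_iff.2 ht
    nlinarith
  · intro hu
    refine ⟨Real.log (u / c), Real.log_pos ((one_lt_div hc).2 hu), ?_⟩
    rw [Real.exp_log (div_pos (hc.trans hu) hc)]
    field_simp

lemma km_S_subst (ν x : ℝ) (hx : 0 < x) :
    kmS ν x * Complex.exp ((ν * Real.log (x/2) : ℝ) * Complex.I) =
      ∫ u in Set.Ioi (x/2), kmG ν x u := by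
  have hc : 0 < x / 2 := by linarith
  rw [← km_image (x/2) hc, integral_image_eq_integral_abs_deriv_smul measurableSet_Ioi
    (f' := fun t => x/2 * Real.exp t)]
  · rw [kmS, ← integral_mul_const]
    refine integral_congr_ae (Eventually.of_forall fun t => ?_)
    have he := Real.exp_pos t
    simp only [kmG]
    rw [abs_of_pos (by positivity), Complex.real_smul, Real.log_mul hc.ne' he.ne', Real.log_exp,
      mul_assoc (Complex.ofReal _), ← Complex.exp_add, ← mul_assoc (Complex.ofReal _),
      ← Complex.ofReal_mul]
    congr 1
    · congr 1
      have e1 : -(x / 2 * Real.exp t) - x ^ 2 / (4 * (x / 2 * Real.exp t)) = -x * Real.cosh t := by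
        rw [Real.cosh_eq, Real.exp_neg]
        field_simp
        ring
      rw [e1, Real.sinh_eq, Real.exp_neg]
      field_simp
      ring
    · congr 1
      push_cast
      ring
  · intro t _
    exact ((Real.hasDerivAt_exp t).const_mul _).hasDerivWithinAt
  · intro a _ b _ h
    have : Real.exp a = Real.exp b := by
      have h' : x/2 * Real.exp a = x/2 * Real.exp b := h
      exact mul_left_cancel₀ hc.ne' h'
    exact Real.exp_injective this

lemma km_Gamma (ν : ℝ) : Complex.Gamma (ν * Complex.I + 1) =
    ∫ u in Set.Ioi (0:ℝ), ((Real.exp (-u) : ℝ) : ℂ) *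
      Complex.exp ((ν * Real.log u : ℝ) * Complex.I) := by
  rw [Complex.Gamma_eq_integral (by simp), Complex.GammaIntegral]
  refine setIntegral_congr_fun measurableSet_Ioi fun u hu => ?_
  have hu' : (0:ℝ) < u := hu
  rw [add_sub_cancel_right, Complex.cpow_def_of_ne_zero (by exact_mod_cast hu'.ne'),
    ← Complex.ofReal_log hu'.le]
  congr 2
  push_cast
  ring

lemma km_T_tend (ν : ℝ) : Tendsto
    (fun x => kmS ν x * Complex.exp ((ν * Real.log (x/2) : ℝ) * Complex.I))
    (nhdsWithin 0 (Set.Ioi 0)) (nhds (Complex.Gamma (ν * Complex.I + 1))) := by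
  have hev : ∀ᶠ x : ℝ in nhdsWithin 0 (Set.Ioi 0), 0 < x := self_mem_nhdsWithin
  have heq : (fun x : ℝ => ∫ u in Set.Ioi (0:ℝ), (Set.Ioi (x/2)).indicator (kmG ν x) u)
      =ᶠ[nhdsWithin 0 (Set.Ioi 0)]
      (fun x => kmS ν x * Complex.exp ((ν * Real.log (x/2) : ℝ) * Complex.I)) := by
    filter_upwards [hev] with x hx
    rw [km_S_subst ν x hx, setIntegral_indicator measurableSet_Ioi, Set.Ioi_inter_Ioi,
      max_eq_right (by linarith)]
  refine Tendsto.congr' heq ?_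
  rw [km_Gamma]
  refine tendsto_integral_filter_of_dominated_convergence (fun u => Real.exp (-u)) ?_ ?_ ?_ ?_
  · refine Eventually.of_forall fun x => ?_
    apply Measurable.aestronglyMeasurable
    apply Measurable.indicator _ measurableSet_Ioi
    unfold kmG
    fun_prop
  · filter_upwards [hev] with x hx
    refine Eventually.of_forall fun u => ?_
    by_cases hu : u ∈ Set.Ioi (x/2)
    · rw [Set.indicator_of_mem hu]
      have hu' : x/2 < u := hu
      have hup : 0 < u := by linarith
      rw [kmG, norm_mul, Complex.norm_exp_ofReal_mul_I, Complex.norm_real, mul_one, norm_mul,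
        Real.norm_of_nonneg (Real.exp_pos _).le]
      have h0 : 0 ≤ 1 - x^2/(4*u^2) := by
        rw [sub_nonneg, div_le_one (by positivity)]
        nlinarith
      have h1 : 0 ≤ x^2/(4*u^2) := by positivity
      have h2 : 0 ≤ x^2/(4*u) := by positivity
      rw [Real.norm_of_nonneg h0]
      have h3 : Real.exp (-u - x^2/(4*u)) ≤ Real.exp (-u) := by
        apply Real.exp_le_exp.2; linarith
      calc _ ≤ 1 * Real.exp (-u) := by gcongr; linarith
        _ = _ := one_mul _
    · rw [Set.indicator_of_notMem hu]
      simpa using (Real.exp_pos (-u)).le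
  · have := exp_neg_integrableOn_Ioi 0 (b := 1) one_pos
    simp only [neg_mul, one_mul] at this
    exact this
  · refine (ae_restrict_iff' measurableSet_Ioi).2 (Eventually.of_forall fun u hu => ?_)
    have hup : (0:ℝ) < u := hu
    have e2 : kmG ν 0 u = ((Real.exp (-u) : ℝ) : ℂ) *
      Complex.exp ((ν * Real.log u : ℝ) * Complex.I) := by simp [kmG]
    rw [← e2]
    have hcont : Continuous (fun x => kmG ν x u) := by unfold kmG; fun_prop
    have ht := (hcont.tendsto 0).mono_left (nhdsWithin_le_nhds (s := Set.Ioi 0))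
    refine ht.congr' ?_
    have : ∀ᶠ x : ℝ in nhdsWithin 0 (Set.Ioi 0), x < 2 * u :=
      nhdsWithin_le_nhds (Iio_mem_nhds (by linarith))
    filter_upwards [this] with x hx
    rw [Set.indicator_of_mem]
    show x/2 < u
    linarith

noncomputable def kmPhi (ν x : ℝ) : ℝ :=
  Complex.arg (Complex.Gamma (ν * Complex.I)) - ν * Real.log (x/2)

lemma km_S_sub (ν : ℝ) (hν : 0 < ν) : Tendsto
    (fun x => kmS ν x - (ν * ‖Complex.Gamma (ν * Complex.I)‖ : ℝ) * Complex.I *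
      Complex.exp ((kmPhi ν x : ℝ) * Complex.I))
    (nhdsWithin 0 (Set.Ioi 0)) (nhds 0) := by
  have h := (km_T_tend ν).sub_const (Complex.Gamma (ν * Complex.I + 1))
  rw [sub_self] at h
  rw [tendsto_zero_iff_norm_tendsto_zero] at h ⊢
  refine h.congr fun x => ?_
  have hG := Complex.norm_mul_exp_arg_mul_I (Complex.Gamma (ν * Complex.I))
  rw [Complex.Gamma_add_one _ (by simp [hν.ne'])]
  have e : kmS ν x * Complex.exp ((ν * Real.log (x/2) : ℝ) * Complex.I) -
      ν * Complex.I * Complex.Gamma (ν * Complex.I) =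
      (kmS ν x - (ν * ‖Complex.Gamma (ν * Complex.I)‖ : ℝ) * Complex.I *
      Complex.exp ((kmPhi ν x : ℝ) * Complex.I)) *
        Complex.exp ((ν * Real.log (x/2) : ℝ) * Complex.I) := by
    rw [sub_mul, mul_assoc _ (Complex.exp _) (Complex.exp _), ← Complex.exp_add]
    congr 1
    have e3 : ((kmPhi ν x : ℝ) * Complex.I + (ν * Real.log (x/2) : ℝ) * Complex.I) =
      Complex.arg (Complex.Gamma (ν * Complex.I)) * Complex.I := by
      unfold kmPhi; push_cast; ring
    rw [e3]
    nth_rewrite 1 [← hG]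
    push_cast
    ring
  rw [e, norm_mul, Complex.norm_exp_ofReal_mul_I, mul_one]

lemma km_A (ν : ℝ) (hν : 0 < ν) : Tendsto
    (fun x => Kim ν x - ‖Complex.Gamma (ν * Complex.I)‖ * Real.cos (kmPhi ν x))
    (nhdsWithin 0 (Set.Ioi 0)) (nhds 0) := by
  have h := ((Complex.continuous_im.tendsto _).comp (km_S_sub ν hν)).div_const ν
  simp only [Complex.zero_im, zero_div] at h
  refine h.congr' ?_
  filter_upwards [self_mem_nhdsWithin] with x hx
  have h1 := km_S_im ν x hx
  have h2 : kmF (fun t => Real.cos (ν * t)) x = Kim ν x := rfl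
  rw [h2] at h1
  simp only [Function.comp, Complex.sub_im]
  rw [← h1, mul_assoc, Complex.im_ofReal_mul, Complex.I_mul_im, Complex.exp_ofReal_mul_I_re]
  field_simp

lemma km_B (ν : ℝ) (hν : 0 < ν) : Tendsto
    (fun x => x * kmF (fun t => Real.cosh t * Real.cos (ν * t)) x
      + ν * ‖Complex.Gamma (ν * Complex.I)‖ * Real.sin (kmPhi ν x))
    (nhdsWithin 0 (Set.Ioi 0)) (nhds 0) := by
  have h := ((Complex.continuous_re.tendsto _).comp (km_S_sub ν hν))
  have h2 : Tendsto (fun x => x * kmF (fun t => Real.cosh t * Real.cos (ν * t)) x - (kmS ν x).re)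
      (nhdsWithin 0 (Set.Ioi 0)) (nhds 0) := by
    have h3 : Tendsto (fun x : ℝ => x * 2) (nhdsWithin 0 (Set.Ioi 0)) (nhds 0) := by
      have : Continuous (fun x : ℝ => x * 2) := by fun_prop
      have := this.tendsto 0
      rw [zero_mul] at this
      exact this.mono_left nhdsWithin_le_nhds
    refine squeeze_zero_norm' ?_ h3
    filter_upwards [self_mem_nhdsWithin] with x hx
    exact km_S_re ν x hx
  have h4 := h2.add h
  simp only [Complex.zero_re, add_zero] at h4
  refine h4.congr fun x => ?_
  simp only [Function.comp, Complex.sub_re]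
  rw [mul_assoc (Complex.ofReal _), Complex.re_ofReal_mul, Complex.I_mul_re,
    Complex.exp_ofReal_mul_I_im]
  ring

lemma km_norm_Gamma (ν : ℝ) (hν : 0 < ν) :
    ‖Complex.Gamma (ν * Complex.I)‖ ^ 2 = π / (ν * Real.sinh (π * ν)) := by
  have h := Complex.Gamma_mul_Gamma_one_sub (ν * Complex.I)
  have hne : -(ν * Complex.I) ≠ 0 := by simp [hν.ne']
  have hc : -(ν * Complex.I) = (starRingEnd ℂ) (ν * Complex.I) := by simp
  rw [show (1 : ℂ) - ν * Complex.I = -(ν * Complex.I) + 1 by ring, Complex.Gamma_add_one _ hne] at h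
  have h5 : Complex.Gamma (-(ν * Complex.I)) = (starRingEnd ℂ) (Complex.Gamma (ν * Complex.I)) := by
    rw [hc, Complex.Gamma_conj]
  rw [h5, ← mul_assoc, ← mul_assoc, Complex.sin_mul_I] at h
  have hm := Complex.mul_conj' (Complex.Gamma (ν * Complex.I))
  have hs : 0 < Real.sinh (π * ν) := Real.sinh_pos_iff.2 (by positivity)
  have hs' : Complex.sinh (π * ν) ≠ 0 := by
    have : ((Real.sinh (π * ν) : ℝ) : ℂ) ≠ 0 := by exact_mod_cast hs.ne'
    simpa using this
  have hν' : (ν : ℂ) ≠ 0 := by exact_mod_cast hν.ne'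
  have hI := Complex.I_ne_zero
  have key : ((‖Complex.Gamma (ν * Complex.I)‖ ^ 2 : ℝ) : ℂ) =
      ((π / (ν * Real.sinh (π * ν)) : ℝ) : ℂ) := by
    push_cast
    rw [← hm]
    rw [eq_div_iff (by positivity)] at h
    · rw [eq_div_iff (mul_ne_zero hν' hs')]
      have hI2 := Complex.I_sq
      linear_combination h + Complex.Gamma (ν * Complex.I) *
        (starRingEnd ℂ) (Complex.Gamma (ν * Complex.I)) * ν * Complex.sinh (π * ν) * hI2
  exact_mod_cast key

lemma km_K_deriv (ν x : ℝ) (hx : 0 < x) :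
    HasDerivAt (Kim ν) (- kmF (fun t => Real.cosh t * Real.cos (ν * t)) x) x :=
  km_deriv x hx 0 _ (by fun_prop) (km_b0 ν)

lemma km_C_deriv (ν x : ℝ) (hx : 0 < x) :
    HasDerivAt (fun x => x * kmF (fun t => Real.cosh t * Real.cos (ν * t)) x)
      (-(x^2 - ν^2) * Kim ν x / x) x := by
  have h := (hasDerivAt_id x).mul (km_deriv x hx 1 _ (by fun_prop) (km_b1 ν))
  refine HasDerivAt.congr_deriv h ?_
  have ho := km_ode ν x hx
  have h2 : kmF (fun t => Real.cos (ν * t)) x = Kim ν x := rfl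
  rw [h2] at ho
  rw [eq_div_iff hx.ne']
  simp only [id]
  linear_combination -ho

lemma km_integral (ν ν' ξ : ℝ) (hξ : 0 < ξ) (hd : ν^2 - ν'^2 ≠ 0) :
    ∫ x in Set.Ici ξ, Kim ν x * Kim ν' x / x =
      (Kim ν ξ * (ξ * kmF (fun t => Real.cosh t * Real.cos (ν' * t)) ξ)
        - (ξ * kmF (fun t => Real.cosh t * Real.cos (ν * t)) ξ) * Kim ν' ξ) / (ν^2 - ν'^2) := by
  obtain ⟨C1, hC1, b1⟩ := km_decay 0 _ (km_b0 ν)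
  obtain ⟨C2, hC2, b2⟩ := km_decay 0 _ (km_b0 ν')
  obtain ⟨D1, hD1, d1⟩ := km_decay 1 _ (km_b1 ν)
  obtain ⟨D2, hD2, d2⟩ := km_decay 1 _ (km_b1 ν')
  have b1' : ∀ x, 1 ≤ x → |Kim ν x| ≤ C1 * Real.exp (-x) := b1
  have b2' : ∀ x, 1 ≤ x → |Kim ν' x| ≤ C2 * Real.exp (-x) := b2
  have hint : IntegrableOn (fun x => Kim ν x * Kim ν' x / x) (Set.Ioi ξ) := by
    refine integrable_of_isBigO_exp_neg (b := 1) one_pos ?_ ?_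
    · intro x hx
      have hx0 : 0 < x := lt_of_lt_of_le hξ hx
      exact (((km_K_deriv ν x hx0).continuousAt.mul (km_K_deriv ν' x hx0).continuousAt).div
        continuousAt_id hx0.ne').continuousWithinAt
    · refine Asymptotics.IsBigO.of_bound (C1 * C2) ?_
      filter_upwards [eventually_ge_atTop 1] with x hx
      have hx0 : 0 < x := by linarith
      rw [norm_div, norm_mul, Real.norm_of_nonneg hx0.le, Real.norm_eq_abs, Real.norm_eq_abs,
        Real.norm_of_nonneg (Real.exp_pos _).le, neg_one_mul]
      have he : Real.exp (-x) ≤ 1 := by rw [Real.exp_le_one_iff]; linarith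
      have hp := Real.exp_pos (-x)
      calc |Kim ν x| * |Kim ν' x| / x ≤ |Kim ν x| * |Kim ν' x| / 1 := by gcongr
        _ ≤ (C1 * Real.exp (-x)) * (C2 * 1) := by
          rw [div_one]
          gcongr
          · exact b1' x hx
          · exact (b2' x hx).trans (by gcongr)
        _ = _ := by ring
  rw [integral_Ici_eq_integral_Ioi]
  have key := MeasureTheory.integral_Ioi_of_hasDerivAt_of_tendsto (a := ξ) (m := (0:ℝ))
    (f := fun x => Kim ν x * (x * kmF (fun t => Real.cosh t * Real.cos (ν' * t)) x)
        - (x * kmF (fun t => Real.cosh t * Real.cos (ν * t)) x) * Kim ν' x)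
    (f' := fun x => (ν'^2 - ν^2) * (Kim ν x * Kim ν' x / x)) ?_ ?_ (hint.const_mul _) ?_
  · rw [integral_const_mul] at key
    rw [eq_div_iff hd]
    linear_combination -key
  · exact (((km_K_deriv ν ξ hξ).continuousAt.mul (km_C_deriv ν' ξ hξ).continuousAt).sub
      ((km_C_deriv ν ξ hξ).continuousAt.mul (km_K_deriv ν' ξ hξ).continuousAt)).continuousWithinAt
  · intro x hx
    have hx0 : 0 < x := lt_trans hξ hx
    refine HasDerivAt.congr_deriv (((km_K_deriv ν x hx0).mul (km_C_deriv ν' x hx0)).sub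
      ((km_C_deriv ν x hx0).mul (km_K_deriv ν' x hx0))) ?_
    field_simp
    ring
  · have hl : Tendsto (fun x : ℝ => (C1 * D2 + D1 * C2) * (x ^ 1 * Real.exp (-x))) atTop
        (nhds 0) := by
      simpa using (Real.tendsto_pow_mul_exp_neg_atTop_nhds_zero 1).const_mul (C1 * D2 + D1 * C2)
    refine squeeze_zero_norm' ?_ hl
    filter_upwards [eventually_ge_atTop 1] with x hx
    have hx0 : 0 < x := by linarith
    have he : Real.exp (-x) ≤ 1 := by rw [Real.exp_le_one_iff]; linarith
    have hp := Real.exp_pos (-x)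
    refine (norm_sub_le _ _).trans ?_
    rw [norm_mul, norm_mul, norm_mul, norm_mul, Real.norm_of_nonneg hx0.le]
    simp only [Real.norm_eq_abs]
    have hd2 := (d2 x hx).trans (mul_le_mul_of_nonneg_left he hD2)
    have hd1 := (d1 x hx).trans (mul_le_mul_of_nonneg_left he hD1)
    calc _ ≤ (C1 * Real.exp (-x)) * (x * (D2 * 1)) + (x * (D1 * 1)) * (C2 * Real.exp (-x)) := by
          gcongr
          · exact b1' x hx
          · exact b2' x hx
      _ = _ := by ring

lemma km_bdd (A f g : ℝ → ℝ) (l : Filter ℝ) (c : ℝ) (hf : Tendsto f l (nhds 0))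
    (hg : ∀ x, |g x| ≤ c) (hA : ∀ x, A x = f x * g x) : Tendsto A l (nhds 0) := by
  have h : Tendsto (fun x => |f x| * c) l (nhds 0) := by
    simpa using hf.abs.mul_const c
  refine squeeze_zero_norm (fun x => ?_) h
  rw [hA, norm_mul, Real.norm_eq_abs, Real.norm_eq_abs]
  gcongr
  exact hg x

theorem macdonald_integral_asymptotic (ν ν' : ℝ) (hν : 0 < ν) (hν' : 0 < ν')
    (hne : ν ≠ ν') :
    Tendsto (fun ξ : ℝ =>
        (∫ x in Set.Ici ξ, Kim ν x * Kim ν' x / x) -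
          π / (2 * Real.sqrt (ν * ν' * Real.sinh (π * ν) * Real.sinh (π * ν'))) *
            (Real.sin (-(ν - ν') * Real.log (ξ / 2) +
                Complex.arg (Complex.Gamma (ν * Complex.I)) -
                Complex.arg (Complex.Gamma (ν' * Complex.I))) / (ν - ν') +
             Real.sin (-(ν + ν') * Real.log (ξ / 2) +
                Complex.arg (Complex.Gamma (ν * Complex.I)) +
                Complex.arg (Complex.Gamma (ν' * Complex.I))) / (ν + ν')))
      (nhdsWithin 0 (Set.Ioi 0)) (nhds 0) := by
  have hd : ν^2 - ν'^2 ≠ 0 := by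
    rw [show ν^2 - ν'^2 = (ν - ν') * (ν + ν') by ring]
    exact mul_ne_zero (sub_ne_zero.2 hne) (by positivity)
  have hs : 0 < Real.sinh (π * ν) := Real.sinh_pos_iff.2 (by positivity)
  have hs' : 0 < Real.sinh (π * ν') := Real.sinh_pos_iff.2 (by positivity)
  have hr := km_norm_Gamma ν hν
  have hr' := km_norm_Gamma ν' hν'
  have hA := km_A ν hν
  have hA' := km_A ν' hν'
  have hB := km_B ν hν
  have hB' := km_B ν' hν'
  set r := ‖Complex.Gamma (ν * Complex.I)‖ with hrdef
  set r' := ‖Complex.Gamma (ν' * Complex.I)‖ with hrdef'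
  have hr0 : 0 ≤ r := norm_nonneg _
  have hr0' : 0 ≤ r' := norm_nonneg _
  have hrr : π / (2 * Real.sqrt (ν * ν' * Real.sinh (π * ν) * Real.sinh (π * ν')))
      = r * r' / 2 := by
    have : π / Real.sqrt (ν * ν' * Real.sinh (π * ν) * Real.sinh (π * ν')) = r * r' := by
      have h2 : (r * r')^2 = π^2 / (ν * ν' * Real.sinh (π * ν) * Real.sinh (π * ν')) := by
        rw [mul_pow, hr, hr']
        field_simp
      rw [← Real.sqrt_sq (mul_nonneg hr0 hr0'), h2, Real.sqrt_div (by positivity),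
        Real.sqrt_sq Real.pi_pos.le]
    rw [← this]
    field_simp
  rw [hrr]
  have bc : ∀ μ ρ : ℝ, 0 ≤ ρ → ∀ x, |ρ * Real.cos (kmPhi μ x)| ≤ ρ := fun μ ρ h x => by
    rw [abs_mul, abs_of_nonneg h]
    exact mul_le_of_le_one_right h (Real.abs_cos_le_one _)
  have bs : ∀ μ ρ : ℝ, 0 ≤ ρ → ∀ x, |ρ * Real.sin (kmPhi μ x)| ≤ ρ := fun μ ρ h x => by
    rw [abs_mul, abs_of_nonneg h]
    exact mul_le_of_le_one_right h (Real.abs_sin_le_one _)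
  have t1 := hA.mul hB'
  have t2 := hB.mul hA'
  have t3 := km_bdd _ _ _ _ _ hA (bs ν' (ν' * r') (by positivity)) (fun x => rfl)
  have t4 := km_bdd _ _ _ _ _ hB' (bc ν r hr0) (fun x => rfl)
  have t5 := km_bdd _ _ _ _ _ hB (bc ν' r' hr0') (fun x => rfl)
  have t6 := km_bdd _ _ _ _ _ hA' (bs ν (ν * r) (by positivity)) (fun x => rfl)
  have tt := (((t1.sub t3).add t4).sub ((t2.add t5).sub t6)).div_const (ν^2 - ν'^2)
  simp only [mul_zero, sub_zero, add_zero, zero_div] at tt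
  refine tt.congr' ?_
  filter_upwards [self_mem_nhdsWithin] with ξ hξ
  rw [km_integral ν ν' ξ hξ hd]
  have e1 : -(ν - ν') * Real.log (ξ / 2) +
                Complex.arg (Complex.Gamma (ν * Complex.I)) -
                Complex.arg (Complex.Gamma (ν' * Complex.I)) = kmPhi ν ξ - kmPhi ν' ξ := by
    unfold kmPhi; ring
  have e2 : -(ν + ν') * Real.log (ξ / 2) +
                Complex.arg (Complex.Gamma (ν * Complex.I)) +
                Complex.arg (Complex.Gamma (ν' * Complex.I)) = kmPhi ν ξ + kmPhi ν' ξ := by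
    unfold kmPhi; ring
  rw [e1, e2, Real.sin_sub, Real.sin_add]
  have n1 : ν - ν' ≠ 0 := sub_ne_zero.2 hne
  have n2 : ν + ν' ≠ 0 := by positivity
  rw [show ν^2 - ν'^2 = (ν - ν') * (ν + ν') by ring]
  field_simp
  ring
end

section
/- Let f : ℝ → ℝ be a real analytic function with f(0) = 0. Then, in the distributional sense, sin(aη + f(η)) / (πη) converges to the Dirac delta distribution δ(η) as a → +∞; precisely, for every smooth compactly supported function φ : ℝ → ℝ, lim_{a → +∞} ∫_ℝ φ(η) · sin(a η + f(η)) / (π η) dη = φ(0). -/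
open Real Filter MeasureTheory

lemma aux_int (φ h : ℝ → ℝ) (hφ : Continuous φ) (hφc : HasCompactSupport φ)
    (h0 : h 0 = 0) (hh : Differentiable ℝ h) :
    Integrable (fun η => φ η * (h η / (π * η))) := by
  have hc : Continuous (dslope h 0) := by
    rw [continuous_iff_continuousAt]
    intro x
    by_cases hx : x = 0
    · subst hx; exact continuousAt_dslope_same.2 (hh 0)
    · exact (continuousAt_dslope_of_ne hx).2 (hh x).continuousAt
  have hi : Integrable (fun η => φ η * (dslope h 0 η / π)) :=
    (hφ.mul (hc.div_const π)).integrable_of_hasCompactSupport hφc.mul_right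
  refine hi.congr ?_
  filter_upwards [Measure.ae_ne volume (0:ℝ)] with x hx
  rw [dslope_of_ne _ hx, slope_def_field, h0]
  simp only [sub_zero]
  rw [div_div, mul_comm π]

lemma aux_RL (k : ℝ → ℝ) (hk : Integrable k) :
    Tendsto (fun a : ℝ => ∫ η, Real.cos (a * η) * k η) atTop (nhds 0) := by
  have h1 := Real.tendsto_integral_exp_smul_cocompact (fun x => (k x : ℂ))
  have h2 : Tendsto (fun a : ℝ => a / (2 * π)) atTop (cocompact ℝ) :=
    (tendsto_id.atTop_div_const (by positivity)).mono_right atTop_le_cocompact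
  have h3 := (Complex.continuous_re.tendsto 0).comp (h1.comp h2)
  refine h3.congr fun a => ?_
  have hi : Integrable (fun v : ℝ => Real.fourierChar (-(v * (a / (2 * π)))) • (k v : ℂ)) := by
    refine Integrable.mono (g := fun v : ℝ => (k v : ℂ)) hk.ofReal ?_ ?_
    · exact (by fun_prop : Continuous fun v : ℝ =>
        Real.fourierChar (-(v * (a / (2 * π))))).aestronglyMeasurable.smul hk.ofReal.aestronglyMeasurable
    · exact Eventually.of_forall fun v => by simp [Circle.norm_smul]
  have := Complex.reCLM.integral_comp_comm hi
  simp only [Complex.reCLM_apply] at this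
  simp only [Function.comp]
  rw [← this]
  congr 1
  ext v
  rw [Circle.smul_def, Real.fourierChar_apply, smul_eq_mul, Complex.re_mul_ofReal, Complex.exp_ofReal_mul_I_re]
  rw [show 2 * π * (-(v * (a / (2 * π)))) = -(a * v) by field_simp, Real.cos_neg]

lemma aux_dir (g : ℝ → ℝ) (hg : ContDiff ℝ (⊤ : ℕ∞) g) (hgc : HasCompactSupport g) :
    Tendsto (fun a : ℝ => ∫ η, g η * (Real.sin (a * η) / (π * η))) atTop (nhds (g 0)) := by
  have hGc : HasCompactSupport (fun x => (g x : ℂ)) := hgc.comp_left (g := Complex.ofReal) rfl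
  have hG : ContDiff ℝ (⊤ : ℕ∞) (fun x => (g x : ℂ)) := Complex.ofRealCLM.contDiff.comp hg
  let S := hGc.toSchwartzMap hG
  have hS : ∀ x, S x = (g x : ℂ) := fun x => rfl
  have hFi : Integrable (FourierTransform.fourier (fun x => (g x : ℂ))) :=
    (FourierTransform.fourier S).integrable
  have hgi : Integrable (fun x => (g x : ℂ)) := S.integrable
  have hinv : ∫ x, FourierTransform.fourier (fun x => (g x : ℂ)) x = (g 0 : ℂ) := by
    have := congrFun (hG.continuous.fourierInv_fourier_eq hgi hFi) 0
    rw [← this, Real.fourierInv_eq]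
    simp
  have hA : Tendsto (fun a : ℝ => a / (2 * π)) atTop atTop :=
    tendsto_id.atTop_div_const (by positivity)
  have h1 := intervalIntegral_tendsto_integral hFi (tendsto_neg_atTop_atBot.comp hA) hA
  rw [hinv] at h1
  have h3 := (Complex.continuous_re.tendsto _).comp h1
  refine h3.congr fun a => ?_
  simp only [Function.comp, Complex.ofReal_re]
  rw [← Complex.ofReal_re (∫ η, g η * (Real.sin (a * η) / (π * η)))]
  congr 1
  rw [← integral_complex_ofReal]
  simp_rw [Real.fourier_real_eq_integral_exp_smul]
  rw [intervalIntegral_integral_swap]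
  · apply integral_congr_ae
    filter_upwards [Measure.ae_ne volume (0:ℝ)] with x hx
    simp only [smul_eq_mul]
    rw [intervalIntegral.integral_mul_const]
    have hc : (-2 * π * x * Complex.I : ℂ) ≠ 0 := by
      simp [hx, Real.pi_ne_zero]
    have e : ∀ y : ℝ, Complex.exp (((-2 * π * x * y : ℝ) : ℂ) * Complex.I) = Complex.exp ((-2 * π * x * Complex.I : ℂ) * y) := by
      intro y; congr 1; push_cast; ring
    simp_rw [e]
    rw [integral_exp_mul_complex hc]
    have hp : (π : ℂ) ≠ 0 := by exact_mod_cast Real.pi_ne_zero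
    have hx' : (x : ℂ) ≠ 0 := by exact_mod_cast hx
    rw [show (-2 * π * x * Complex.I : ℂ) * ((a / (2 * π) : ℝ) : ℂ) = -(a * x : ℂ) * Complex.I by
      push_cast; field_simp,
      show (-2 * π * x * Complex.I : ℂ) * ((-(a / (2 * π)) : ℝ) : ℂ) = (a * x : ℂ) * Complex.I by
      push_cast; field_simp]
    push_cast
    rw [Complex.sin]
    field_simp
    rw [Complex.I_sq]
    ring
  · have : Integrable (fun p : ℝ × ℝ => (1:ℂ) * (g p.2 : ℂ)) ((volume.restrict (Set.uIoc (-(a / (2 * π))) (a / (2 * π)))).prod volume) := by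
      haveI : IsFiniteMeasure (volume.restrict (Set.uIoc (-(a / (2 * π))) (a / (2 * π)))) :=
        ⟨by simp [Set.uIoc]⟩
      exact (integrable_const (1:ℂ)).mul_prod hgi
    refine this.mono ?_ ?_
    · refine Continuous.aestronglyMeasurable ?_
      have := hG.continuous
      simp only [Function.uncurry_def]
      fun_prop
    · refine Eventually.of_forall fun p => ?_
      simp only [Function.uncurry_def, norm_smul, Complex.norm_exp_ofReal_mul_I, norm_mul, norm_one]
      rfl

theorem sin_kernel_tendsto_delta (f : ℝ → ℝ) (hf : ∀ x : ℝ, AnalyticAt ℝ f x)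
    (hf0 : f 0 = 0) (φ : ℝ → ℝ) (hφ : ContDiff ℝ (⊤ : ℕ∞) φ) (hφc : HasCompactSupport φ) :
    Tendsto (fun a : ℝ => ∫ η : ℝ, φ η * (Real.sin (a * η + f η) / (π * η)))
      atTop (nhds (φ 0)) := by
  have hfs : ContDiff ℝ (⊤ : ℕ∞) f := contDiff_iff_contDiffAt.2 fun x => (hf x).contDiffAt
  have hfd : Differentiable ℝ f := fun x => (hf x).differentiableAt
  have hk := aux_int φ (fun η => Real.sin (f η)) hφ.continuous hφc (by simp [hf0]) (by fun_prop)
  have h1 := aux_RL _ hk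
  have h2 := aux_dir (fun η => φ η * Real.cos (f η)) (hφ.mul hfs.cos) hφc.mul_right
  have h3 := h2.add h1
  simp only [hf0, Real.cos_zero, mul_one, add_zero] at h3
  refine h3.congr fun a => ?_
  rw [← integral_add]
  · congr 1
    ext η
    rw [Real.sin_add]
    ring
  · have := aux_int φ (fun η => Real.cos (f η) * Real.sin (a * η)) hφ.continuous hφc (by simp) (by fun_prop)
    refine this.congr (Eventually.of_forall fun η => ?_)
    simp only
    ring
  · have := aux_int φ (fun η => Real.cos (a * η) * Real.sin (f η)) hφ.continuous hφc (by simp [hf0]) (by fun_prop)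
    refine this.congr (Eventually.of_forall fun η => ?_)
    simp only
    ring
end
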